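/- arXiv:math/0105053 — 4 statements merged into one kernel-verified Lean document; each statement's English description precedes it below -/
import Mathlib

section
/- Let q be a divisor of e with e/q and e/p coprime, and suppose the irreducible character χ^{α,φ} of W is σ^q-stable, with fixed extension χ̃^{α,φ} to ⟨σ^q⟩⋉W. Then for every w ∈ σ^q W and every 0 ≤ i < c_{α,p}, the extended characters satisfy χ̃^{θ^i(α),φ}(w) = ζ^{qid}·χ̃^{α,φ}(w). -/
/-!
Common framework for formalizing T. Shoji, "Green functions associated to
complex reflection groups, II" (arXiv:math/0105053).

We model:
* `e`-partitions of `n` as functions `ZMod e → Multiset ℕ`;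
* the complex reflection group `W̃ = G(e,1,n)` as the semidirect product
  `(Fin n → Multiplicative (ZMod e)) ⋊ Equiv.Perm (Fin n)`, and
  `W = G(e,p,n)` as the kernel of the mod-`p` sum character;
* the tensor space `V^{⊗n}` concretely via matrices indexed by
  `Fin n → (Σ k : ZMod e, Fin (m k))`;
* symmetric functions in the (finitely many, `m k ≥ n`) variables
  `x_i^{(k)}` in evaluated form, i.e. as functions of an assignment
  `xv : (Σ k : ZMod e, Fin (m k)) → ℂ`.
-/

open scoped BigOperators

attribute [local instance] Classical.propDecidable

namespace GreenII

/-! ## Combinatorics of e-partitions -/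

/-- An `e`-partition of `n`: a tuple of partitions (multisets of positive
integers) indexed by `ZMod e`, with total size `n`. -/
def IsEPartition (e : ℕ) [NeZero e] (n : ℕ) (α : ZMod e → Multiset ℕ) : Prop :=
  (∀ k, ∀ x ∈ α k, 0 < x) ∧ (∑ k : ZMod e, (α k).sum) = n

/-- The shift operator `θ = θ_p`, `θ(α)^{(k)} = α^{(k-d)}`. -/
def theta (e : ℕ) [NeZero e] (d : ℕ) (α : ZMod e → Multiset ℕ) : ZMod e → Multiset ℕ :=
  fun k => α (k - (d : ZMod e))

/-- `c_{α,p}`: the size of the `θ`-orbit of `α`. -/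
noncomputable def csize (e : ℕ) [NeZero e] (d : ℕ) (α : ZMod e → Multiset ℕ) : ℕ :=
  Function.minimalPeriod (theta e d) α

/-- `Δ(α) = ∑_k k · l(α^{(k)})`. -/
def Delta (e : ℕ) [NeZero e] (α : ZMod e → Multiset ℕ) : ℕ :=
  ∑ k : ZMod e, k.val * (α k).card

/-- `l(α) = ∑_k l(α^{(k)})`, the total number of parts. -/
def lenE (e : ℕ) [NeZero e] (α : ZMod e → Multiset ℕ) : ℕ :=
  ∑ k : ZMod e, (α k).card

/-- `α` and `β` lie in the same `θ`-orbit. -/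
def SameOrbit (e : ℕ) [NeZero e] (d : ℕ) (α β : ZMod e → Multiset ℕ) : Prop :=
  ∃ i, (theta e d)^[i] α = β

/-! ## The groups `W̃ = G(e,1,n)` and `W = G(e,p,n)` -/

/-- The "diagonal" part of `G(e,1,n)`. -/
abbrev NC (e n : ℕ) := Fin n → Multiplicative (ZMod e)

/-- The permutation action of `𝔖_n` on the diagonal part. -/
def permAut (e n : ℕ) (x : Equiv.Perm (Fin n)) : NC e n ≃* NC e n where
  toFun f := f ∘ ⇑x.symm
  invFun f := f ∘ ⇑x
  left_inv f := by funext i; simp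
  right_inv f := by funext i; simp
  map_mul' f g := rfl

def permHom (e n : ℕ) : Equiv.Perm (Fin n) →* MulAut (NC e n) where
  toFun x := permAut e n x
  map_one' := rfl
  map_mul' x y := rfl

/-- `W̃ = G(e,1,n) ≅ (ℤ/eℤ)^n ⋊ 𝔖_n`, with `w = x(a_1,…,a_n)` recorded as
`⟨(a_i), x⟩`. -/
abbrev Wt (e n : ℕ) := NC e n ⋊[permHom e n] Equiv.Perm (Fin n)

noncomputable instance WtFintype (e n : ℕ) [NeZero e] : Fintype (Wt e n) :=
  Fintype.ofEquiv (NC e n × Equiv.Perm (Fin n))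
    { toFun := fun x => ⟨x.1, x.2⟩
      invFun := fun x => (x.left, x.right)
      left_inv := fun _ => rfl
      right_inv := fun _ => rfl }

/-- The character `w ↦ ∑ a_i mod p` of `W̃`. -/
noncomputable def wsumHom (e p n : ℕ) (hp : p ∣ e) : Wt e n →* Multiplicative (ZMod p) where
  toFun w := Multiplicative.ofAdd (∑ i, ZMod.castHom hp (ZMod p) (w.left i).toAdd)
  map_one' := by simp
  map_mul' w w' := by
    have h : ∀ i, ((w * w').left i).toAdd
        = (w.left i).toAdd + (w'.left (w.right.symm i)).toAdd := fun _ => rfl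
    simp only [h, map_add, Finset.sum_add_distrib, ofAdd_add]
    congr 2
    exact Equiv.sum_comp w.right.symm
      (fun i => ZMod.castHom hp (ZMod p) ((w'.left i).toAdd))

/-- `W = G(e,p,n)`: the subgroup of `W̃` on which `∑ a_i ≡ 0 (mod p)`. -/
noncomputable def Wgrp (e p n : ℕ) (hp : p ∣ e) : Subgroup (Wt e n) :=
  (wsumHom e p n hp).ker

/-- `σ = t_1 ∈ W̃`. -/
def sigmaElt (e n : ℕ) [NeZero n] : Wt e n :=
  SemidirectProduct.inl (fun i => Multiplicative.ofAdd (if i = (0 : Fin n) then (1 : ZMod e) else 0))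

/-- membership in the coset `σ^q W`. -/
def inCoset (e p n : ℕ) [NeZero n] (hp : p ∣ e) (q : ℕ) (w : Wt e n) : Prop :=
  ∃ u ∈ Wgrp e p n hp, w = (sigmaElt e n) ^ q * u

/-- conjugacy under `W`. -/
def IsConjW (e p n : ℕ) (hp : p ∣ e) (w w' : Wt e n) : Prop :=
  ∃ u ∈ Wgrp e p n hp, u * w * u⁻¹ = w'

/-- The `e`-partition recording the conjugacy class of `w ∈ W̃`:
a `k`-cycle of length `l` (a cycle of the underlying permutation whose
accumulated `ZMod e`-color is `k`, fixed points counting as `1`-cycles)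
contributes a part `l` to the `k`-th component. -/
noncomputable def classOf (e n : ℕ) [NeZero e] (w : Wt e n) : ZMod e → Multiset ℕ := fun k =>
  ((w.right.cycleFactorsFinset.val.filter
      (fun c => (∑ i ∈ c.support, (w.left i).toAdd) = k)).map fun c => c.support.card)
    + Multiset.replicate
        ((Finset.univ.filter fun i : Fin n => w.right i = i ∧ (w.left i).toAdd = k).card) 1

/-! ### The standard class representative `w_α(b)` -/

/-- The list of (part, color) pairs of an `e`-partition. -/
noncomputable def partsList (e : ℕ) [NeZero e] (α : ZMod e → Multiset ℕ) : List (ℕ × ZMod e) :=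
  (Finset.univ : Finset (ZMod e)).toList.flatMap fun k => (α k).toList.map fun r => (r, k)

/-- the color datum of `w_α(b)`: each cycle carries its color at its first
point, except the first (exceptional) cycle, which carries `k - b` at its
first point and `b` at its last point. -/
noncomputable def aexc (e : ℕ) [NeZero e] (L : List (ℕ × ZMod e)) (b : ZMod e) :
    (Σ i : Fin L.length, Fin (L.get i).1) → ZMod e := fun x =>
  if (x.1 : ℕ) = 0 then
    (if (x.2 : ℕ) = 0 then (L.get x.1).2 - b else 0)
      + (if (x.2 : ℕ) = (L.get x.1).1 - 1 then b else 0)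
  else if (x.2 : ℕ) = 0 then (L.get x.1).2 else 0

/-- The standard representative `w_α(b) ∈ W̃` of the paper, 2.6: a product of
disjoint cycles matching `α`, of the form `t_{i_1}^k z` except for one
exceptional cycle `t_{i_1}^{k-b} t_{i_m}^{b} z`. -/
noncomputable def wrep (e n : ℕ) [NeZero e] (α : ZMod e → Multiset ℕ) (b : ZMod e) : Wt e n :=
  if hcard : Fintype.card (Σ i : Fin (partsList e α).length, Fin ((partsList e α).get i).1) = n then
    let φ := Fintype.equivFinOfCardEq hcard
    ⟨fun t => Multiplicative.ofAdd (aexc e (partsList e α) b (φ.symm t)),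
      φ.symm.trans ((Equiv.sigmaCongrRight fun _ => finRotate _).trans φ)⟩
  else 1

/-! ## The tensor space `V^{⊗n}` -/

/-- Basis index of `V = ⊕_k V_k`, `dim V_k = m k`. -/
abbrev BIdx (e : ℕ) [NeZero e] (m : ZMod e → ℕ) := Σ k : ZMod e, Fin (m k)

/-- Basis index of `V^{⊗n}`. -/
abbrev TIdx (e n : ℕ) [NeZero e] (m : ZMod e → ℕ) := Fin n → BIdx e m

/-- `ζ` raised to a `ZMod e` exponent. -/
noncomputable def zmpow (e : ℕ) [NeZero e] (ζ : ℂ) (c : ZMod e) : ℂ := ζ ^ c.val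

/-- the matrix of `w ∈ W̃` on `V^{⊗n}` (𝔖_n permutes the factors, and
`t_k` multiplies by `ζ^j` if the `k`-th factor lies in `V_j`). -/
noncomputable def rhoMat (e n : ℕ) [NeZero e] (ζ : ℂ) (m : ZMod e → ℕ) (w : Wt e n) :
    Matrix (TIdx e n m) (TIdx e n m) ℂ := fun b' b =>
  if b' = b ∘ ⇑w.right.symm then ∏ s, ζ ^ (((w.left s).toAdd.val) * (b' s).1.val) else 0

/-- The operator `D` (multiplication by `x_{i_1} ⋯ x_{i_n}`), with the
variables evaluated via `xv`. -/
noncomputable def Dmat (e n : ℕ) [NeZero e] (m : ZMod e → ℕ) (xv : BIdx e m → ℂ) :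
    Matrix (TIdx e n m) (TIdx e n m) ℂ :=
  Matrix.diagonal fun b => ∏ s, xv (b s)

/-- `τ` on the basis of `V`: `v_j^{(k)} ↦ v_j^{(k+d)}` (uses `m (k+d) = m k`). -/
def tauB (e : ℕ) [NeZero e] (d : ℕ) (m : ZMod e → ℕ) (hm : ∀ k, m (k + (d : ZMod e)) = m k) :
    BIdx e m → BIdx e m := fun b => ⟨b.1 + (d : ZMod e), Fin.cast (hm b.1).symm b.2⟩

/-- `g ↦ g^{⊗ n}`: the matrix of `g ∈ End V` acting diagonally on `V^{⊗n}`. -/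
noncomputable def tensorPow (e n : ℕ) [NeZero e] (m : ZMod e → ℕ)
    (g : Matrix (BIdx e m) (BIdx e m) ℂ) : Matrix (TIdx e n m) (TIdx e n m) ℂ :=
  Matrix.of fun b' b => ∏ s, g (b' s) (b s)

/-- the matrix of `τ` on `V`. -/
noncomputable def tauV (e : ℕ) [NeZero e] (d : ℕ) (m : ZMod e → ℕ)
    (hm : ∀ k, m (k + (d : ZMod e)) = m k) : Matrix (BIdx e m) (BIdx e m) ℂ :=
  fun b' b => if b' = tauB e d m hm b then 1 else 0

/-- the matrix of `τ` on `V^{⊗n}`. -/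
noncomputable def tauMat (e n : ℕ) [NeZero e] (d : ℕ) (m : ZMod e → ℕ)
    (hm : ∀ k, m (k + (d : ZMod e)) = m k) : Matrix (TIdx e n m) (TIdx e n m) ℂ :=
  tensorPow e n m (tauV e d m hm)

/-- a member of `G = GL_{m_0} × ⋯ × GL_{m_{e-1}}` (as an endomorphism of V,
invertibility stated separately). -/
def IsBlockDiag (e : ℕ) [NeZero e] (m : ZMod e → ℕ) (g : Matrix (BIdx e m) (BIdx e m) ℂ) : Prop :=
  ∀ b b' : BIdx e m, b.1 ≠ b'.1 → g b b' = 0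

/-- a block upper unitriangular matrix (product of root subgroups for the
positive roots of `G`). -/
def IsUpperUni (e : ℕ) [NeZero e] (m : ZMod e → ℕ) (g : Matrix (BIdx e m) (BIdx e m) ℂ) : Prop :=
  (∀ b, g b b = 1) ∧
    ∀ b b' : BIdx e m, b ≠ b' → ¬(b.1 = b'.1 ∧ b.2.val < b'.2.val) → g b b' = 0

/-! ## Symmetric functions (evaluated form) -/

/-- value of the variable `x_i^{(k)}` under the assignment `xv` (junk `0` out
of range). -/
noncomputable def xval (e : ℕ) [NeZero e] (m : ZMod e → ℕ) (xv : BIdx e m → ℂ)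
    (k : ZMod e) (i : ℕ) : ℂ :=
  if h : i < m k then xv ⟨k, ⟨i, h⟩⟩ else 0

/-- `h_j`: the order of the image of `j` in `ℤ/pℤ`. -/
noncomputable def hOrd (p j : ℕ) : ℕ := addOrderOf ((j : ZMod p))

/-- `j₁ d` where `j₁ = p / h_j`: the number of components of the variable
system `𝒳_j`. -/
noncomputable def Esys (p d j : ℕ) : ℕ := (p / hOrd p j) * d

/-- the variable `X_i^{(k)} = x_i^{(k)} x_i^{(k+jd)} ⋯ x_i^{(k+(h_j-1)jd)}`
of the system `𝒳_j`. -/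
noncomputable def Xvar (e : ℕ) [NeZero e] (p d : ℕ) (m : ZMod e → ℕ) (xv : BIdx e m → ℂ)
    (j k i : ℕ) : ℂ :=
  ∏ s ∈ Finset.range (hOrd p j), xval e m xv (((k + s * j * d : ℕ) : ZMod e)) i

/-- number of variables in the `k`-th component of any of the systems `𝒳_j`. -/
noncomputable def mmX (e : ℕ) [NeZero e] (m : ZMod e → ℕ) : ℕ → ℕ := fun k => m ((k : ℕ) : ZMod e)

/-- The variables of the system `𝒳_j`, as a doubly indexed family. -/
noncomputable def vvX (e : ℕ) [NeZero e] (p d : ℕ) (m : ZMod e → ℕ) (xv : BIdx e m → ℂ)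
    (j : ℕ) : ℕ → ℕ → ℂ := fun k i => Xvar e p d m xv j k i

/-- complete homogeneous symmetric polynomial `h_r` in `N` variables. -/
noncomputable def hcomp (N r : ℕ) (v : ℕ → ℂ) : ℂ :=
  ∑ c ∈ Finset.Nat.antidiagonalTuple N r, ∏ i : Fin N, v i ^ c i

/-- the parts of a partition in decreasing order (`0` beyond the length). -/
noncomputable def lamOf (μ : Multiset ℕ) (i : ℕ) : ℕ := ((μ.sort (· ≤ ·)).reverse).getD i 0

/-- Schur polynomial in `N` variables (Jacobi–Trudi). -/
noncomputable def schurFin (N : ℕ) (μ : Multiset ℕ) (v : ℕ → ℂ) : ℂ :=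
  Matrix.det (Matrix.of fun i j : Fin N =>
    if h : (0 : ℤ) ≤ (lamOf μ i + j : ℤ) - i then hcomp N ((lamOf μ i + j : ℤ) - i).toNat v
    else 0)

/-- monomial symmetric polynomial in `N` variables. -/
noncomputable def monoFin (N : ℕ) (μ : Multiset ℕ) (v : ℕ → ℂ) : ℂ :=
  ∑ c ∈ (Finset.Nat.antidiagonalTuple N μ.sum).filter
      (fun c => ((List.ofFn c : List ℕ) : Multiset ℕ).filter (fun x => 0 < x) = μ),
    ∏ i : Fin N, v i ^ c i

/-! ### generic families for a variable system with `E` components -/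

/-- `p_r^{(i)} = ∑_{k<E} u^{ik} p_r(x^{(k)})` (formula (2.2.2)/(2.4.2), with
`u` a primitive `E`-th root of unity), for the system of variables
`vv k i` (`k < E`, `i < mm k`); `p_0^{(i)} = 1`. -/
noncomputable def pGenSys (u : ℂ) (E : ℕ) (mm : ℕ → ℕ) (vv : ℕ → ℕ → ℂ) (i r : ℕ) : ℂ :=
  if r = 0 then 1 else ∑ k ∈ Finset.range E, u ^ (i * k) * ∑ s ∈ Finset.range (mm k), vv k s ^ r

/-- the power sum `p_γ` of an `E`-tuple of partitions (2.2.1). -/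
noncomputable def pAlphaSys (u : ℂ) (E : ℕ) (mm : ℕ → ℕ) (vv : ℕ → ℕ → ℂ)
    (γ : ℕ → Multiset ℕ) : ℂ :=
  ∏ k ∈ Finset.range E, ((γ k).map fun r => pGenSys u E mm vv k r).prod

/-- the Schur function `s_γ` of an `E`-tuple of partitions. -/
noncomputable def sAlphaSys (E : ℕ) (mm : ℕ → ℕ) (vv : ℕ → ℕ → ℂ) (γ : ℕ → Multiset ℕ) : ℂ :=
  ∏ k ∈ Finset.range E, schurFin (mm k) (γ k) (vv k)

/-- the monomial symmetric function `m_γ` of an `E`-tuple of partitions. -/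
noncomputable def mAlphaSys (E : ℕ) (mm : ℕ → ℕ) (vv : ℕ → ℕ → ℂ) (γ : ℕ → Multiset ℕ) : ℂ :=
  ∏ k ∈ Finset.range E, monoFin (mm k) (γ k) (vv k)

/-- the function `q_{r,±}^{(k)}(x;t)` of [S], (3.1.1). -/
noncomputable def qGenSys (t : ℂ) (E : ℕ) (mm : ℕ → ℕ) (vv : ℕ → ℕ → ℂ)
    (sgn : Bool) (k r : ℕ) : ℂ :=
  if r = 0 then 1 else
    let k' := if sgn then (k + 1) % E else (k + E - 1) % E
    ∑ i ∈ Finset.range (mm k),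
      vv k i ^ ((r : ℤ) + (mm k : ℤ) - 1 - (mm k' : ℤ)) *
        (∏ jj ∈ Finset.range (mm k'), (vv k i - t * vv k' jj)) /
        ∏ jj ∈ (Finset.range (mm k)).erase i, (vv k i - vv k jj)

/-- the function `q_{γ,±}(x;t)` of [S], (3.1.2). -/
noncomputable def qAlphaSys (t : ℂ) (E : ℕ) (mm : ℕ → ℕ) (vv : ℕ → ℕ → ℂ)
    (sgn : Bool) (γ : ℕ → Multiset ℕ) : ℂ :=
  ∏ k ∈ Finset.range E, ((γ k).map fun r => qGenSys t E mm vv sgn k r).prod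

/-- `z_β = ∏ i^{n_i} n_i!` for a partition `β = (1^{n_1} 2^{n_2} ⋯)`. -/
noncomputable def zPart (μ : Multiset ℕ) : ℂ :=
  ∏ i ∈ μ.toFinset, (i : ℂ) ^ (μ.count i) * (Nat.factorial (μ.count i) : ℂ)

/-- `z_γ(t) = z_γ ∏_{k,j} (1 - u^k t^{γ_j^{(k)}})⁻¹` for an `E`-tuple of
partitions `γ` (`u` the `E`-th root of unity), cf. (3.1.3). -/
noncomputable def zClassSys (u t : ℂ) (E : ℕ) (γ : ℕ → Multiset ℕ) : ℂ :=
  ((E : ℂ) ^ (∑ k ∈ Finset.range E, (γ k).card)) * (∏ k ∈ Finset.range E, zPart (γ k)) *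
    (∏ k ∈ Finset.range E, ((γ k).map fun r => (1 - u ^ k * t ^ r)).prod)⁻¹

/-! ### the `j`-th pieces attached to an e-partition -/

/-- the truncation `α{j} = (α^{(0)},…,α^{(j₁d-1)})` (used when `c_{α,p} ∣ j`). -/
noncomputable def braceF (e : ℕ) [NeZero e] (p d : ℕ) (j : ℕ) (α : ZMod e → Multiset ℕ) :
    ℕ → Multiset ℕ :=
  fun k => if k < Esys p d j then α ((k : ℕ) : ZMod e) else 0

/-- the `j₁d`-partition `α[j]` of `n/h` (condition (2.6.1)): component `k/h`
has parts `α_i^{(k)}/h`. -/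
noncomputable def bracketF (e : ℕ) [NeZero e] (p d : ℕ) (j : ℕ) (α : ZMod e → Multiset ℕ) :
    ℕ → Multiset ℕ :=
  fun k' => if k' < Esys p d j then (α (((hOrd p j * k' : ℕ) : ZMod e))).map (fun r => r / hOrd p j)
  else 0

/-- condition (2.6.1): `h_j` divides all parts `α_i^{(k)}`, and `h_j ∣ k`
whenever `α^{(k)} ≠ ∅`. -/
def Cond261 (e : ℕ) [NeZero e] (p j : ℕ) (α : ZMod e → Multiset ℕ) : Prop :=
  (∀ k, ∀ r ∈ α k, hOrd p j ∣ r) ∧ ∀ k : ZMod e, α k ≠ 0 → hOrd p j ∣ k.val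

/-- `s_{α{j}}(𝒳_j)`. -/
noncomputable def schurBrace (e : ℕ) [NeZero e] (p d : ℕ) (m : ZMod e → ℕ) (xv : BIdx e m → ℂ)
    (j : ℕ) (α : ZMod e → Multiset ℕ) : ℂ :=
  sAlphaSys (Esys p d j) (mmX e m) (vvX e p d m xv j) (braceF e p d j α)

/-- `p_{α[j]}(𝒳_j)` (2.6; the root of unity for the system `𝒳_j` is `ζ^h`). -/
noncomputable def pBracket (e : ℕ) [NeZero e] (p d : ℕ) (ζ : ℂ) (m : ZMod e → ℕ)
    (xv : BIdx e m → ℂ) (j : ℕ) (α : ZMod e → Multiset ℕ) : ℂ :=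
  pAlphaSys (ζ ^ hOrd p j) (Esys p d j) (mmX e m) (vvX e p d m xv j) (bracketF e p d j α)

/-- `l(α[j])`. -/
noncomputable def lenBracket (e : ℕ) [NeZero e] (p d : ℕ) (j : ℕ)
    (α : ZMod e → Multiset ℕ) : ℕ :=
  ∑ k ∈ Finset.range (Esys p d j), (bracketF e p d j α k).card

/-! ### Schur functions and power sums for `σ^q W` (2.10) -/

/-- the `j`-th component `s^j_{α,φ}` of the Schur function `𝐬_{α,φ}` for
`σ^q W` (2.10.1); the character `φ = φ_r` of `Γ_α = ⟨τ^c⟩ ≅ ℤ/(p/c)ℤ` is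
encoded by `r`, via `φ_r(τ^j) = ζ^{drj}` for `c ∣ j`. -/
noncomputable def sTuple (e : ℕ) [NeZero e] (p d q : ℕ) (ζ : ℂ) (m : ZMod e → ℕ)
    (xv : BIdx e m → ℂ) (α : ZMod e → Multiset ℕ) (r : ℕ) (j : ℕ) : ℂ :=
  if csize e d α ∣ j then
    ζ ^ (d * r * j) *
      ∑ i ∈ Finset.range (csize e d α),
        ζ ^ (q * i * d) * schurBrace e p d m xv j ((theta e d)^[i] α)
  else 0

/-- the `j`-th component `p^j_{β,b}` of the power sum `𝐩_{β,b}` for `σ^q W`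
(2.10.2). -/
noncomputable def pTuple (e : ℕ) [NeZero e] (p d : ℕ) (ζ : ℂ) (m : ZMod e → ℕ)
    (xv : BIdx e m → ℂ) (β : ZMod e → Multiset ℕ) (b : ZMod e) (j : ℕ) : ℂ :=
  if Cond261 e p j β then
    (hOrd p j : ℂ) ^ (lenBracket e p d j β) *
      zmpow e ζ (-(((Delta e β : ZMod e) + b) * ((j * d : ℕ) : ZMod e))) *
      pBracket e p d ζ m xv j β
  else 0

/-! ## The model for (extensions of) the irreducible characters of `W` -/

/-- trace of `f` on a subspace (junk `0` if not invariant). -/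
noncomputable def traceOn {V : Type*} [AddCommGroup V] [Module ℂ V]
    (S : Submodule ℂ V) (f : V →ₗ[ℂ] V) : ℂ :=
  if h : ∀ v ∈ S, f v ∈ S then LinearMap.trace ℂ S (f.restrict h) else 0

/-- the scalar by which the torus element `diag dv ∈ G` acts on a highest
weight vector of weight `α`. -/
noncomputable def weightOf (e : ℕ) [NeZero e] (m : ZMod e → ℕ) (α : ZMod e → Multiset ℕ)
    (dv : BIdx e m → ℂ) : ℂ :=
  ∏ b : BIdx e m, dv b ^ (lamOf (α b.1) b.2.val)

/-- the space of highest weight vectors of weight `α` in `V^{⊗n}`: the model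
for the irreducible `W̃`-module `Z_α` (1.3.1, 1.4). -/
noncomputable def hwSubmodule (e n : ℕ) [NeZero e] (m : ZMod e → ℕ)
    (α : ZMod e → Multiset ℕ) : Submodule ℂ (TIdx e n m → ℂ) :=
  (⨅ g ∈ {g | IsUpperUni e m g},
      Module.End.eigenspace (Matrix.mulVecLin (tensorPow e n m g)) 1) ⊓
    ⨅ dv : BIdx e m → ℂ,
      Module.End.eigenspace (Matrix.mulVecLin (tensorPow e n m (Matrix.diagonal dv)))
        (weightOf e m α dv)

/-- the model for the irreducible `W`-module `Z_{α,φ_r}`: the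
`φ_r(τ^c)`-eigenspace of `τ^c` on `Z_α`, where `c = c_{α,p}` and
`φ_r(τ^c) = ζ^{cdr}`. -/
noncomputable def ZSub (e n : ℕ) [NeZero e] (d : ℕ) (m : ZMod e → ℕ)
    (hm : ∀ k, m (k + (d : ZMod e)) = m k) (ζ : ℂ) (α : ZMod e → Multiset ℕ) (r : ℕ) :
    Submodule ℂ (TIdx e n m → ℂ) :=
  hwSubmodule e n m α ⊓
    Module.End.eigenspace (Matrix.mulVecLin ((tauMat e n d m hm) ^ (csize e d α)))
      (ζ ^ (csize e d α * d * r))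

/-- The model for the irreducible character `χ^{α,φ_r}` of `W` and for its
chosen extension `χ̃^{α,φ_r}` to `⟨σ^q⟩ ⋉ W`: the trace of `w` on the model
`Z_{α,φ_r} ⊆ V^{⊗n}`. -/
noncomputable def charExt (e n : ℕ) [NeZero e] (d : ℕ) (m : ZMod e → ℕ)
    (hm : ∀ k, m (k + (d : ZMod e)) = m k) (ζ : ℂ) (α : ZMod e → Multiset ℕ) (r : ℕ)
    (w : Wt e n) : ℂ :=
  traceOn (ZSub e n d m hm ζ α r) (Matrix.mulVecLin (rhoMat e n ζ m w))

/-! ## symbols, a-function, similarity; the reflection representation -/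

/-- the multiset of entries of the symbol `Λ(α) = α + Λ⁰` of type `(r,0)`. -/
noncomputable def entriesSym (e : ℕ) [NeZero e] (m : ZMod e → ℕ) (rsym : ℕ)
    (α : ZMod e → Multiset ℕ) : Multiset ℕ :=
  (Finset.univ : Finset (BIdx e m)).val.map fun b =>
    lamOf (α b.1) b.2.val + rsym * (m b.1 - 1 - b.2.val)

noncomputable def pairMinSum (M : Multiset ℕ) : ℕ :=
  (M.bind fun a => M.map fun b => min a b).sum

/-- the `a`-function (3.5.2) on symbols of type `(rsym, 0)`. -/
noncomputable def aVal (e : ℕ) [NeZero e] (m : ZMod e → ℕ) (rsym : ℕ)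
    (α : ZMod e → Multiset ℕ) : ℕ :=
  pairMinSum (entriesSym e m rsym α) - pairMinSum (entriesSym e m rsym (fun _ => 0))

/-- similarity of symbols: equality of entries with multiplicities. -/
def SimSym (e : ℕ) [NeZero e] (m : ZMod e → ℕ) (rsym : ℕ) (α β : ZMod e → Multiset ℕ) : Prop :=
  entriesSym e m rsym α = entriesSym e m rsym β

/-- the reflection representation `M = ℂ^n` of `W̃` (`w(e_i) = ζ^{a_i} e_{x(i)}`). -/
noncomputable def refMat (e n : ℕ) [NeZero e] (ζ : ℂ) (w : Wt e n) :
    Matrix (Fin n) (Fin n) ℂ :=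
  fun i' i => if i' = w.right i then zmpow e ζ (w.left i').toAdd else 0

/-- The functional `R_q(f)` of (4.2.1), for a function `f` on the coset `σ^q W`. -/
noncomputable def Rq (e p d n : ℕ) [NeZero e] [NeZero n] (hp : p ∣ e) (ζ t : ℂ) (q : ℕ)
    (f : Wt e n → ℂ) : ℂ :=
  (ζ ^ (q * d) * t ^ (d * n) - 1) * (∏ i ∈ Finset.Icc 1 (n - 1), (t ^ (e * i) - 1)) *
    (Nat.card (Wgrp e p n hp) : ℂ)⁻¹ *
    ∑ w ∈ Finset.univ.filter (fun w => inCoset e p n hp q w),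
      (refMat e n ζ w).det * f w / (t • (1 : Matrix (Fin n) (Fin n) ℂ) - refMat e n ζ w).det

/-- `N^*`: the number of reflections in `W`. -/
noncomputable def Nstar (e p n : ℕ) [NeZero e] (hp : p ∣ e) (ζ : ℂ) : ℕ :=
  Nat.card {w : Wt e n // w ∈ Wgrp e p n hp ∧ w ≠ 1 ∧ (refMat e n ζ w - 1).rank = 1}

end GreenII
namespace GreenII

/-! ### Helper lemmas -/

theorem tauB_bij (e : ℕ) [NeZero e] (d : ℕ) (m : ZMod e → ℕ)
    (hm : ∀ k, m (k + (d : ZMod e)) = m k) : Function.Bijective (tauB e d m hm) := by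
  apply Function.Injective.bijective_of_finite
  rintro ⟨k, x⟩ ⟨k', x'⟩ h
  have h1 : k + (d : ZMod e) = k' + d := congrArg Sigma.fst h
  have h1' : k = k' := add_right_cancel h1
  subst h1'
  have h2 := eq_of_heq (Sigma.mk.inj h).2
  have h3 : x.val = x'.val := by
    have := congrArg Fin.val h2
    simpa only [Fin.val_cast] using this
  rw [Fin.ext h3]

/-- `τ` as a permutation of the basis of `V`. -/
noncomputable def tauE (e : ℕ) [NeZero e] (d : ℕ) (m : ZMod e → ℕ)
    (hm : ∀ k, m (k + (d : ZMod e)) = m k) : BIdx e m ≃ BIdx e m :=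
  Equiv.ofBijective _ (tauB_bij e d m hm)

/-- `τ` as a permutation of the basis of the tensor space. -/
noncomputable def tauF (e n : ℕ) [NeZero e] (d : ℕ) (m : ZMod e → ℕ)
    (hm : ∀ k, m (k + (d : ZMod e)) = m k) : TIdx e n m ≃ TIdx e n m :=
  Equiv.piCongrRight fun _ => tauE e d m hm

/-- `τ` as a linear automorphism of the tensor space. -/
noncomputable def tauL (e n : ℕ) [NeZero e] (d : ℕ) (m : ZMod e → ℕ)
    (hm : ∀ k, m (k + (d : ZMod e)) = m k) : (TIdx e n m → ℂ) ≃ₗ[ℂ] (TIdx e n m → ℂ) :=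
  LinearEquiv.funCongrLeft ℂ ℂ (tauF e n d m hm).symm

section
variable (e n : ℕ) [NeZero e] (d : ℕ) (m : ZMod e → ℕ) (hm : ∀ k, m (k + (d : ZMod e)) = m k)

theorem tauL_apply (v : TIdx e n m → ℂ) (b : TIdx e n m) :
    tauL e n d m hm v (tauF e n d m hm b) = v b := by
  simp [tauL, LinearEquiv.funCongrLeft_apply, LinearMap.funLeft_apply]

theorem tauMat_mulVec (v : TIdx e n m → ℂ) :
    Matrix.mulVec (tauMat e n d m hm) v = tauL e n d m hm v := by
  funext b'
  obtain ⟨c, rfl⟩ := (tauF e n d m hm).surjective b'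
  rw [tauL_apply]
  have : ∀ b, tauMat e n d m hm (tauF e n d m hm c) b = if c = b then 1 else 0 := by
    intro b
    simp only [tauMat, tensorPow, tauV, Matrix.of_apply]
    split_ifs with h
    · subst h
      apply Finset.prod_eq_one
      intro s _
      exact if_pos rfl
    · obtain ⟨s, hs⟩ := Function.ne_iff.mp h
      apply Finset.prod_eq_zero (Finset.mem_univ s)
      apply if_neg
      intro h'
      exact hs ((tauB_bij e d m hm).1 h')
  simp [Matrix.mulVec, dotProduct, this]

theorem tensorPow_tauL (g : Matrix (BIdx e m) (BIdx e m) ℂ) (v : TIdx e n m → ℂ) :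
    Matrix.mulVec (tensorPow e n m g) (tauL e n d m hm v) =
      tauL e n d m hm (Matrix.mulVec
        (tensorPow e n m (g.submatrix (tauE e d m hm) (tauE e d m hm))) v) := by
  funext b'
  obtain ⟨c, rfl⟩ := (tauF e n d m hm).surjective b'
  rw [tauL_apply]
  simp only [Matrix.mulVec, dotProduct]
  rw [← Equiv.sum_comp (tauF e n d m hm)]
  simp only [tauL_apply]
  rfl

theorem isUpperUni_submatrix (g : Matrix (BIdx e m) (BIdx e m) ℂ) :
    IsUpperUni e m (g.submatrix (tauE e d m hm) (tauE e d m hm)) ↔ IsUpperUni e m g := by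
  unfold IsUpperUni
  have key : ∀ b b' : BIdx e m,
      ((tauE e d m hm b).1 = (tauE e d m hm b').1 ∧
        (tauE e d m hm b).2.val < (tauE e d m hm b').2.val) ↔
      (b.1 = b'.1 ∧ b.2.val < b'.2.val) := by
    intro b b'
    change (b.1 + (d : ZMod e) = b'.1 + d ∧ b.2.val < b'.2.val) ↔ _
    rw [add_left_inj]
  apply Iff.symm
  rw [(tauE e d m hm).surjective.forall]
  apply and_congr Iff.rfl
  rw [(tauE e d m hm).surjective.forall]
  apply forall_congr'
  intro b
  rw [(tauE e d m hm).surjective.forall]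
  apply forall_congr'
  intro b'
  rw [key, (tauE e d m hm).injective.ne_iff]
  rfl

theorem weightOf_theta (α : ZMod e → Multiset ℕ) (dv : BIdx e m → ℂ) :
    weightOf e m (theta e d α) dv = weightOf e m α (dv ∘ tauE e d m hm) := by
  unfold weightOf
  rw [← Equiv.prod_comp (tauE e d m hm)]
  apply Finset.prod_congr rfl
  intro b _
  have h1 : theta e d α (tauE e d m hm b).1 = α b.1 := by
    change α (b.1 + (d : ZMod e) - d) = _
    rw [add_sub_cancel_right]
  have h2 : (tauE e d m hm b).2.val = b.2.val := rfl
  rw [h1, h2]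
  rfl

theorem mem_hw (α : ZMod e → Multiset ℕ) (v : TIdx e n m → ℂ) :
    v ∈ hwSubmodule e n m α ↔
      (∀ g, IsUpperUni e m g → Matrix.mulVec (tensorPow e n m g) v = v) ∧
      ∀ dv : BIdx e m → ℂ, Matrix.mulVec (tensorPow e n m (Matrix.diagonal dv)) v
        = weightOf e m α dv • v := by
  simp only [hwSubmodule, Submodule.mem_inf, Submodule.mem_iInf, Module.End.mem_eigenspace_iff,
    Matrix.mulVecLin_apply, one_smul, Set.mem_setOf_eq]

theorem mem_hw_theta (α : ZMod e → Multiset ℕ) (v : TIdx e n m → ℂ) :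
    tauL e n d m hm v ∈ hwSubmodule e n m (theta e d α) ↔ v ∈ hwSubmodule e n m α := by
  rw [mem_hw, mem_hw]
  simp only [tensorPow_tauL, weightOf_theta e d m hm, ← map_smul, EmbeddingLike.apply_eq_iff_eq]
  apply and_congr
  · constructor
    · intro h g hg
      have := h (g.submatrix (tauE e d m hm).symm (tauE e d m hm).symm)
        (by rw [← isUpperUni_submatrix e d m hm]; simpa using hg)
      simpa using this
    · intro h g hg
      exact h _ ((isUpperUni_submatrix e d m hm g).2 hg)
  · constructor
    · intro h dv
      have := h (dv ∘ (tauE e d m hm).symm)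
      simpa [Function.comp_assoc] using this
    · intro h dv
      have := h (dv ∘ tauE e d m hm)
      simpa using this

theorem tauMat_pow_tauL (c : ℕ) (v : TIdx e n m → ℂ) :
    Matrix.mulVec (tauMat e n d m hm ^ c) (tauL e n d m hm v) =
      tauL e n d m hm (Matrix.mulVec (tauMat e n d m hm ^ c) v) := by
  rw [← tauMat_mulVec, ← tauMat_mulVec, Matrix.mulVec_mulVec, Matrix.mulVec_mulVec,
    ← pow_succ, ← pow_succ']

theorem ZSub_theta (ζ : ℂ) (α : ZMod e → Multiset ℕ) (r : ℕ)
    (hc : csize e d (theta e d α) = csize e d α) :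
    ZSub e n d m hm ζ (theta e d α) r =
      (ZSub e n d m hm ζ α r).map (tauL e n d m hm).toLinearMap := by
  ext u
  obtain ⟨v, rfl⟩ := (tauL e n d m hm).surjective u
  have h1 : tauL e n d m hm v ∈ (ZSub e n d m hm ζ α r).map (tauL e n d m hm).toLinearMap ↔
      v ∈ ZSub e n d m hm ζ α r := by
    simp [Submodule.mem_map]
  rw [h1]
  unfold ZSub
  rw [Submodule.mem_inf, Submodule.mem_inf, mem_hw_theta, hc, Module.End.mem_eigenspace_iff,
    Module.End.mem_eigenspace_iff, Matrix.mulVecLin_apply, Matrix.mulVecLin_apply,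
    tauMat_pow_tauL, ← map_smul, EmbeddingLike.apply_eq_iff_eq]

end

theorem traceOn_map {V : Type*} [AddCommGroup V] [Module ℂ V] (S : Submodule ℂ V)
    (L : V ≃ₗ[ℂ] V) (f : V →ₗ[ℂ] V) (c : ℂ) (hc : c ≠ 0)
    (h : ∀ v, f (L v) = c • L (f v)) :
    traceOn (S.map L.toLinearMap) f = c * traceOn S f := by
  have hmem : ∀ v, L v ∈ S.map L.toLinearMap ↔ v ∈ S := by
    intro v; simp [Submodule.mem_map]
  have hiff : (∀ v ∈ S.map L.toLinearMap, f v ∈ S.map L.toLinearMap) ↔ ∀ v ∈ S, f v ∈ S := by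
    rw [L.surjective.forall]
    apply forall_congr'
    intro v
    rw [hmem, h, ← map_smul, hmem, Submodule.smul_mem_iff _ hc]
  unfold traceOn
  by_cases hS : ∀ v ∈ S, f v ∈ S
  · rw [dif_pos hS, dif_pos (hiff.2 hS)]
    rw [← LinearMap.trace_conj' (f.restrict hS) (L.submoduleMap S), ← smul_eq_mul, ← map_smul]
    congr 1
    ext x
    obtain ⟨y, rfl⟩ := (L.submoduleMap S).surjective x
    simp [LinearEquiv.conj_apply, h]
  · rw [dif_neg hS, dif_neg (fun H => hS (hiff.1 H)), mul_zero]

theorem zeta_pow_congr {e : ℕ} {ζ : ℂ} (hζ : ζ ^ e = 1) {a b : ℕ}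
    (h : (a : ZMod e) = b) : ζ ^ a = ζ ^ b := by
  rw [ZMod.natCast_eq_natCast_iff] at h
  rw [pow_eq_pow_mod a hζ, pow_eq_pow_mod b hζ, h]

theorem rho_tauL (e n : ℕ) [NeZero e] (d : ℕ) (m : ZMod e → ℕ)
    (hm : ∀ k, m (k + (d : ZMod e)) = m k) (ζ : ℂ) (hζ : ζ ^ e = 1) (w : Wt e n)
    (v : TIdx e n m → ℂ) :
    Matrix.mulVec (rhoMat e n ζ m w) (tauL e n d m hm v) =
      ζ ^ ((∑ s, (w.left s).toAdd.val) * d) •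
        tauL e n d m hm (Matrix.mulVec (rhoMat e n ζ m w) v) := by
  funext b'
  obtain ⟨c, rfl⟩ := (tauF e n d m hm).surjective b'
  rw [Pi.smul_apply, tauL_apply]
  simp only [Matrix.mulVec, dotProduct]
  rw [← Equiv.sum_comp (tauF e n d m hm), smul_eq_mul, Finset.mul_sum]
  apply Finset.sum_congr rfl
  intro b _
  rw [tauL_apply, ← mul_assoc]
  congr 1
  unfold rhoMat
  have hb : (tauF e n d m hm b) ∘ ⇑w.right.symm = tauF e n d m hm (b ∘ ⇑w.right.symm) := rfl
  simp only [hb, EmbeddingLike.apply_eq_iff_eq, mul_ite, mul_zero]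
  split_ifs
  · rw [Finset.sum_mul, ← Finset.prod_pow_eq_pow_sum, ← Finset.prod_mul_distrib]
    apply Finset.prod_congr rfl
    intro s _
    rw [← pow_add]
    apply zeta_pow_congr hζ
    have : ((tauF e n d m hm c) s).1 = (c s).1 + (d : ZMod e) := rfl
    rw [this]
    push_cast
    simp only [ZMod.natCast_zmod_val]
    ring
  · rfl

theorem coset_sum (e p n q : ℕ) [NeZero e] [NeZero n] (hp : p ∣ e) (w : Wt e n)
    (hw : inCoset e p n hp q w) :
    ((∑ s, (w.left s).toAdd.val : ℕ) : ZMod p) = q := by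
  obtain ⟨u, hu, rfl⟩ := hw
  have h1 : wsumHom e p n hp (sigmaElt e n ^ q * u) = Multiplicative.ofAdd (q : ZMod p) := by
    have hu' : wsumHom e p n hp u = 1 := hu
    have hs : wsumHom e p n hp (sigmaElt e n) = Multiplicative.ofAdd (1 : ZMod p) := by
      simp [wsumHom, sigmaElt, apply_ite, ZMod.cast_one hp]
    rw [map_mul, map_pow, hu', hs, mul_one, ← ofAdd_nsmul, nsmul_one]
  have h2 := congrArg Multiplicative.toAdd h1
  rw [toAdd_ofAdd] at h2
  rw [← h2]
  push_cast
  have h3 : ∀ w : Wt e n, Multiplicative.toAdd (wsumHom e p n hp w) =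
      ∑ i, ZMod.castHom hp (ZMod p) (w.left i).toAdd := fun _ => rfl
  rw [h3]
  apply Finset.sum_congr rfl
  intro s _
  rw [ZMod.castHom_apply, ZMod.natCast_val]

theorem charExt_step (e p d n q : ℕ) [NeZero e] [NeZero n] (hp : p ∣ e) (hd : d = e / p)
    (ζ : ℂ) (hζ : IsPrimitiveRoot ζ e)
    (m : ZMod e → ℕ) (hm : ∀ k, m (k + (d : ZMod e)) = m k)
    (α : ZMod e → Multiset ℕ) (r : ℕ)
    (hc : csize e d (theta e d α) = csize e d α)
    (w : Wt e n) (hw : inCoset e p n hp q w) :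
    charExt e n d m hm ζ (theta e d α) r w = ζ ^ (q * d) * charExt e n d m hm ζ α r w := by
  unfold charExt
  rw [ZSub_theta e n d m hm ζ α r hc]
  apply traceOn_map
  · exact pow_ne_zero _ (hζ.ne_zero (NeZero.ne e))
  · intro v
    rw [Matrix.mulVecLin_apply, Matrix.mulVecLin_apply, rho_tauL e n d m hm ζ hζ.pow_eq_one w v]
    congr 1
    apply zeta_pow_congr hζ.pow_eq_one
    have h := coset_sum e p n q hp w hw
    rw [ZMod.natCast_eq_natCast_iff] at h ⊢
    have he : e = p * d := by rw [hd, Nat.mul_div_cancel' hp]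
    have h2 := Nat.ModEq.mul_right' d h
    rwa [← he] at h2

/-- formula (2.9.2).  Let `q ∣ e` with `e/q` and `e/p`
coprime, and suppose the irreducible character `χ^{α,φ}` of `W` is
`σ^q`-stable (i.e. `p ∣ q·c_{α,p}`), with the fixed (tensor-space model)
extensions `χ̃` to `⟨σ^q⟩⋉W`.  Then for every `w ∈ σ^q W` and `0 ≤ i < c_{α,p}`,
`χ̃^{θ^i(α),φ}(w) = ζ^{qid} χ̃^{α,φ}(w)`. -/
theorem statement4 (e p d n q : ℕ) [NeZero e] [NeZero n] (hp : p ∣ e) (hd : d = e / p)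
    (hq : q ∣ e) (hqp : Nat.Coprime (e / q) (e / p))
    (ζ : ℂ) (hζ : IsPrimitiveRoot ζ e)
    (m : ZMod e → ℕ) (hmn : ∀ k, n ≤ m k) (hm : ∀ k, m (k + (d : ZMod e)) = m k)
    (α : ZMod e → Multiset ℕ) (hα : IsEPartition e n α)
    (r : ℕ) (hr : r < p / csize e d α)
    (hstab : p ∣ q * csize e d α)
    (i : ℕ) (hi : i < csize e d α)
    (w : Wt e n) (hw : inCoset e p n hp q w) :
    charExt e n d m hm ζ ((theta e d)^[i] α) r w =
      ζ ^ (q * i * d) * charExt e n d m hm ζ α r w := by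
  have hper : ∀ j, (theta e d)^[j] α ∈ Function.periodicPts (theta e d) := by
    intro j
    have h0 : α ∈ Function.periodicPts (theta e d) :=
      Function.minimalPeriod_pos_iff_mem_periodicPts.1 (Nat.zero_lt_of_lt hi)
    obtain ⟨N, hN, hN'⟩ := h0
    exact ⟨N, hN, hN'.apply_iterate j⟩
  clear hi
  induction i with
  | zero => simp
  | succ i ih =>
    rw [Function.iterate_succ_apply',
      charExt_step e p d n q hp hd ζ hζ m hm _ r (Function.minimalPeriod_apply (hper i)) w hw, ih,
      ← mul_assoc, ← pow_add]
    congr 2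
    ring

end GreenII
end

section
/- (i) For w, w' ∈ σ^q W, the elements w and w' are conjugate under W if and only if 𝐩_w(x) = 𝐩_{w'}(x), where 𝐩_w = 𝐩_{β,b} for w in the W-orbit of w_β(b). (ii) For w = w_β(b) and w' = w_β(b') in σ^q W (so Δ(β) ≡ q mod p), w and w' are conjugate under W if and only if f_j(w) = f_j(w') for all j = 0,…,p−1, where f_j(w) = bj (mod p) if β satisfies condition (2.6.1) for j, and f_j(w) = 0 otherwise. -/
/-!
Common framework for formalizing T. Shoji, "Green functions associated to
complex reflection groups, II" (arXiv:math/0105053).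

We model:
* `e`-partitions of `n` as functions `ZMod e → Multiset ℕ`;
* the complex reflection group `W̃ = G(e,1,n)` as the semidirect product
  `(Fin n → Multiplicative (ZMod e)) ⋊ Equiv.Perm (Fin n)`, and
  `W = G(e,p,n)` as the kernel of the mod-`p` sum character;
* the tensor space `V^{⊗n}` concretely via matrices indexed by
  `Fin n → (Σ k : ZMod e, Fin (m k))`;
* symmetric functions in the (finitely many, `m k ≥ n`) variables
  `x_i^{(k)}` in evaluated form, i.e. as functions of an assignment
  `xv : (Σ k : ZMod e, Fin (m k)) → ℂ`.
-/

open scoped BigOperators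

attribute [local instance] Classical.propDecidable

namespace GreenII

/-- the invariant `f_j(w_β(b))` of (2.12.2). -/
noncomputable def fjInv (e p : ℕ) [NeZero e] (hp : p ∣ e) (β : ZMod e → Multiset ℕ)
    (b : ZMod e) (j : ℕ) : ZMod p :=
  if Cond261 e p j β then ZMod.castHom hp (ZMod p) b * (j : ZMod p) else 0

/-- power sums can take arbitrary values -/
theorem psum_surj (n : ℕ) (c : ℕ → ℂ) :
    ∃ x : Fin n → ℂ, ∀ r, 0 < r → r ≤ n → ∑ i, x i ^ r = c r := by
  classical
  -- elementary symmetric values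
  have hE : ∃ E : ℕ → ℂ, E 0 = 1 ∧ ∀ k, 0 < k → c k = (-1) ^ (k + 1) * k * E k -
      ∑ a ∈ Finset.HasAntidiagonal.antidiagonal k with a.1 ∈ Set.Ioo 0 k, (-1) ^ a.1 * E a.1 * c a.2 := by
    let E : ℕ → ℂ := fun k => Nat.strongRec (motive := fun _ => ℂ) (fun k ih =>
      if h : k = 0 then 1 else (-1) ^ (k + 1) * (k : ℂ)⁻¹ * (c k +
        ∑ a ∈ (Finset.HasAntidiagonal.antidiagonal k).attach, if h : a.1.1 < k ∧ 0 < a.1.1 then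
          (-1) ^ a.1.1 * ih a.1.1 h.1 * c a.1.2 else 0)) k
    have hEdef : ∀ k, E k = if h : k = 0 then 1 else (-1) ^ (k + 1) * (k : ℂ)⁻¹ * (c k +
        ∑ a ∈ (Finset.HasAntidiagonal.antidiagonal k).attach, if h : a.1.1 < k ∧ 0 < a.1.1 then
          (-1) ^ a.1.1 * E a.1.1 * c a.1.2 else 0) := by
      intro k
      simp only [E]
      rw [Nat.strongRec]
    refine ⟨E, by rw [hEdef]; simp, fun k hk => ?_⟩
    have h1 : ∑ a ∈ Finset.HasAntidiagonal.antidiagonal k with a.1 ∈ Set.Ioo 0 k, (-1) ^ a.1 * E a.1 * c a.2 =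
       ∑ a ∈ (Finset.HasAntidiagonal.antidiagonal k).attach, if h : a.1.1 < k ∧ 0 < a.1.1 then
          (-1) ^ a.1.1 * E a.1.1 * c a.1.2 else 0 := by
      rw [Finset.sum_filter, ← Finset.sum_attach]
      refine Finset.sum_congr rfl fun a _ => ?_
      simp only [Set.mem_Ioo, and_comm, dite_eq_ite]
    rw [h1, hEdef k, dif_neg hk.ne']
    have hk0 : (k : ℂ) ≠ 0 := by exact_mod_cast hk.ne'
    have hs : ((-1 : ℂ) ^ (k + 1)) * (-1) ^ (k + 1) = 1 := by
      rw [← mul_pow]; simp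
    generalize (∑ a ∈ (Finset.HasAntidiagonal.antidiagonal k).attach, if h : a.1.1 < k ∧ 0 < a.1.1 then
          (-1) ^ a.1.1 * E a.1.1 * c a.1.2 else 0) = S
    generalize (-1 : ℂ) ^ (k + 1) = u at *
    have : u * k * (u * (k : ℂ)⁻¹ * (c k + S)) = (u * u) * (k * (k : ℂ)⁻¹) * (c k + S) := by ring
    rw [this, hs, mul_inv_cancel₀ hk0]; ring
  obtain ⟨E, hE0, hE⟩ := hE
  let Q : Polynomial ℂ := ∑ i ∈ Finset.range (n + 1), Polynomial.monomial (n - i) ((-1) ^ i * E i)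
  have hQc : ∀ i ≤ n, Q.coeff (n - i) = (-1) ^ i * E i := by
    intro i hi
    simp only [Q, Polynomial.finsetSum_coeff, Polynomial.coeff_monomial]
    rw [Finset.sum_eq_single i]
    · simp
    · intro b hb hbi
      rw [if_neg]
      simp at hb; omega
    · intro h; simp at h; omega
  have hQd : Q.natDegree ≤ n := by
    refine Polynomial.natDegree_sum_le_of_forall_le _ _ fun i _ => ?_
    exact (Polynomial.natDegree_monomial_le _).trans (by omega)
  have hQ0 : Q.coeff n = 1 := by simpa [hE0] using hQc 0 (by omega)
  have hQn : Q.natDegree = n := by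
    apply le_antisymm hQd
    exact Polynomial.le_natDegree_of_ne_zero (by rw [hQ0]; simp)
  have hlead : Q.leadingCoeff = 1 := by rw [Polynomial.leadingCoeff, hQn, hQ0]
  have hcard : Q.roots.card = n := by
    rw [← hQn]; exact (IsAlgClosed.splits Q).natDegree_eq_card_roots.symm
  obtain ⟨l, hl⟩ := Quot.exists_rep Q.roots
  have hl' : (l : Multiset ℂ) = Q.roots := hl
  have hll : l.length = n := by rw [← hcard, ← hl']; rfl
  subst hll
  refine ⟨l.get, ?_⟩
  have hmap : (Finset.univ : Finset (Fin l.length)).val.map l.get = Q.roots := by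
    rw [← hl']
    have := List.ofFn_get l
    conv_rhs => rw [← this]
    simp [Fin.univ_val_map]
  have hes : ∀ k ≤ l.length, MvPolynomial.aeval l.get (MvPolynomial.esymm (Fin l.length) ℂ k) = E k := by
    intro k hk
    rw [MvPolynomial.aeval_esymm_eq_multiset_esymm, hmap]
    have h := Polynomial.coeff_eq_esymm_roots_of_splits (IsAlgClosed.splits Q) (k := l.length - k) (by omega)
    rw [hlead, hQn, hQc k hk] at h
    have : l.length - (l.length - k) = k := by omega
    rw [this, one_mul] at h
    exact (mul_left_cancel₀ (pow_ne_zero _ (by simp)) h).symm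
  intro r
  induction r using Nat.strong_induction_on with
  | _ r ih =>
    intro hr hrn
    have h := congrArg (MvPolynomial.aeval l.get) (MvPolynomial.psum_eq_mul_esymm_sub_sum (Fin l.length) ℂ r hr)
    have hp : ∀ r, MvPolynomial.aeval l.get (MvPolynomial.psum (Fin l.length) ℂ r) = ∑ i, l.get i ^ r := by
      intro r; simp [MvPolynomial.psum]
    rw [hp, map_sub, map_mul, map_mul, hes r hrn, map_sum] at h
    rw [h, hE r hr]
    congr 1
    · simp
    · refine Finset.sum_congr rfl fun a ha => ?_
      simp only [Finset.mem_filter, Finset.HasAntidiagonal.mem_antidiagonal, Set.mem_Ioo] at ha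
      rw [map_mul, map_mul, hp, hes _ (by omega), ih a.2 (by omega) (by omega) (by omega)]
      simp

/-- an element of `W̃` from data on a type equivalent to `Fin n` -/
def mkW {e n : ℕ} {X : Type} (φ : X ≃ Fin n) (A : X → ZMod e) (s : Equiv.Perm X) : Wt e n :=
  ⟨fun t => Multiplicative.ofAdd (A (φ.symm t)), φ.symm.trans (s.trans φ)⟩

theorem mkW_mul {e n : ℕ} {X : Type} (φ : X ≃ Fin n) (A B : X → ZMod e) (s t : Equiv.Perm X) :
    mkW φ A s * mkW φ B t = mkW φ (fun x => A x + B (s.symm x)) (s * t) := by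
  apply SemidirectProduct.ext
  · funext i
    change Multiplicative.ofAdd (A (φ.symm i)) *
      Multiplicative.ofAdd (B (φ.symm ((φ.symm.trans (s.trans φ)).symm i))) = _
    rw [← ofAdd_add]
    simp [mkW]
  · ext i
    simp [mkW]

theorem mkW_surj {e n : ℕ} {X : Type} (φ : X ≃ Fin n) (w : Wt e n) :
    ∃ A s, w = mkW φ A s := by
  refine ⟨fun x => (w.left (φ x)).toAdd, φ.trans (w.right.trans φ.symm), ?_⟩
  apply SemidirectProduct.ext
  · funext i; simp [mkW]
  · ext i; simp [mkW]

theorem mkW_inj {e n : ℕ} {X : Type} (φ : X ≃ Fin n) {A B : X → ZMod e} {s t : Equiv.Perm X}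
    (h : mkW φ A s = mkW φ B t) : A = B ∧ s = t := by
  constructor
  · funext x
    have := congrArg (fun w : Wt e n => (w.left (φ x)).toAdd) h
    simpa [mkW] using this
  · ext x
    have := congrArg (fun w : Wt e n => φ.symm (w.right (φ x))) h
    simpa [mkW] using this

theorem wsum_mkW {e p n : ℕ} (hp : p ∣ e) {X : Type} [Fintype X] (φ : X ≃ Fin n)
    (A : X → ZMod e) (s : Equiv.Perm X) :
    wsumHom e p n hp (mkW φ A s) =
      Multiplicative.ofAdd (∑ x, ZMod.castHom hp (ZMod p) (A x)) := by
  change Multiplicative.ofAdd (∑ i, ZMod.castHom hp (ZMod p) (A (φ.symm i))) = _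
  congr 1
  exact Equiv.sum_comp φ.symm (fun x => ZMod.castHom hp (ZMod p) (A x))

/-! the model set of a list -/
abbrev XL {e : ℕ} (L : List (ℕ × ZMod e)) := Σ i : Fin L.length, Fin (L.get i).1

abbrev rotL {e : ℕ} (L : List (ℕ × ZMod e)) : Equiv.Perm (XL L) :=
  Equiv.sigmaCongrRight fun _ => finRotate _

theorem partsList_sum (e : ℕ) [NeZero e] (α : ZMod e → Multiset ℕ) :
    ((partsList e α).map Prod.fst).sum = ∑ k, (α k).sum := by
  have h : ∀ l : List (ZMod e), ((l.flatMap fun k => (α k).toList.map fun r => (r, k)).map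
      Prod.fst).sum = (l.map fun k => (α k).sum).sum := by
    intro l
    induction l with
    | nil => simp
    | cons a l ih =>
      simp only [List.flatMap_cons, List.map_append, List.sum_append, ih, List.map_map,
        List.map_cons, List.sum_cons]
      congr 1
      have : (Prod.fst ∘ fun r : ℕ => (r, a)) = id := rfl
      rw [this, List.map_id, Multiset.sum_toList]
  rw [partsList, h, Finset.sum_map_toList]

theorem partsList_count (e : ℕ) [NeZero e] (α : ZMod e → Multiset ℕ) (r : ℕ) (k : ZMod e) :
    (partsList e α).count (r, k) = (α k).count r := by
  have h : ∀ l : List (ZMod e), (l.flatMap fun k => (α k).toList.map fun r => (r, k)).count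
      (r, k) = (l.map fun k' => if k' = k then (α k).count r else 0).sum := by
    intro l
    induction l with
    | nil => simp
    | cons a l ih =>
      simp only [List.flatMap_cons, List.count_append, ih, List.map_cons, List.sum_cons]
      congr 1
      split_ifs with h
      · subst h
        have h2 := List.count_map_of_injective (α a).toList (fun r : ℕ => (r, a))
          (fun x y h => by simpa using h) r
        rw [h2, ← Multiset.coe_count, Multiset.coe_toList]
      · rw [List.count_eq_zero]
        simp [h]
  rw [partsList, h, Finset.sum_map_toList]
  simp

theorem partsList_mem (e : ℕ) [NeZero e] (α : ZMod e → Multiset ℕ) (r : ℕ) (k : ZMod e) :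
    (r, k) ∈ partsList e α ↔ r ∈ α k := by
  rw [← List.count_pos_iff, partsList_count, Multiset.count_pos]

theorem card_XL {e : ℕ} [NeZero e] {n : ℕ} {α : ZMod e → Multiset ℕ} (h : IsEPartition e n α) :
    Fintype.card (XL (partsList e α)) = n := by
  rw [Fintype.card_sigma]
  simp only [Fintype.card_fin]
  rw [← h.2, ← partsList_sum, ← List.sum_ofFn]
  congr 1
  conv_rhs => rw [← List.ofFn_get (partsList e α), List.map_ofFn]
  rfl

theorem exists_phi {e : ℕ} [NeZero e] {n : ℕ} {α : ZMod e → Multiset ℕ}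
    (h : IsEPartition e n α) : ∃ φ : XL (partsList e α) ≃ Fin n, ∀ b,
      wrep e n α b = mkW φ (aexc e (partsList e α) b) (rotL _) := by
  refine ⟨Fintype.equivFinOfCardEq (card_XL h), fun b => ?_⟩
  rw [wrep, dif_pos (card_XL h)]
  rfl

theorem rot_lt {r t : ℕ} (ht : t + 1 < r) :
    finRotate r ⟨t, by omega⟩ = ⟨t + 1, ht⟩ := by
  obtain _ | r := r
  · omega
  rw [finRotate_of_lt (by omega)]

theorem rot_symm_val {r : ℕ} (s : Fin r) :
    (((finRotate r).symm s : Fin r) : ℕ) = r - 1 ↔ (s : ℕ) = 0 := by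
  obtain _ | r := r
  · exact s.elim0
  obtain ⟨t, rfl⟩ := (finRotate (r + 1)).surjective s
  rw [Equiv.symm_apply_apply, coe_finRotate]
  split_ifs with h
  · subst h; simp
  · have := t.2
    have hne : (t : ℕ) ≠ r := fun hh => h (Fin.ext hh)
    simp [hne]

/-- the twist on the last point of the first cycle -/
def tw {e : ℕ} (L : List (ℕ × ZMod e)) (b : ZMod e) : XL L → ZMod e := fun x =>
  if (x.1 : ℕ) = 0 ∧ (x.2 : ℕ) = (L.get x.1).1 - 1 then b else 0

theorem tw_conj {e n : ℕ} [NeZero e] (L : List (ℕ × ZMod e)) (φ : XL L ≃ Fin n) (b : ZMod e) :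
    mkW φ (tw L b) 1 * mkW φ (aexc e L 0) (rotL L) =
      mkW φ (aexc e L b) (rotL L) * mkW φ (tw L b) 1 := by
  rw [mkW_mul, mkW_mul, one_mul, mul_one]
  congr 1
  funext ⟨i, s⟩
  change tw L b ⟨i, s⟩ + aexc e L 0 ⟨i, s⟩ =
    aexc e L b ⟨i, s⟩ + tw L b ⟨i, (finRotate _).symm s⟩
  unfold tw aexc
  have h3 := rot_symm_val s
  simp only [h3]
  split_ifs <;> first | (exfalso; tauto) | ring

theorem tw_sum {e p n : ℕ} [NeZero e] [NeZero n] (hp : p ∣ e) (L : List (ℕ × ZMod e))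
    (hpos : ∀ i, 0 < (L.get i).1) (φ : XL L ≃ Fin n) (b : ZMod e) :
    wsumHom e p n hp (mkW φ (tw L b) 1) = Multiplicative.ofAdd (ZMod.castHom hp (ZMod p) b) := by
  rw [wsum_mkW]
  congr 1
  have h0 : 0 < L.length := (φ.symm 0).1.pos
  have h1 := hpos ⟨0, h0⟩
  rw [Finset.sum_eq_single (⟨⟨0, h0⟩, ⟨(L.get ⟨0, h0⟩).1 - 1, by omega⟩⟩ : XL L)]
  · simp [tw]
  · rintro ⟨i, s⟩ - hne
    rw [tw, if_neg, map_zero]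
    rintro ⟨h2, h3⟩
    apply hne
    obtain ⟨i, hi⟩ := i
    simp only at h2
    subst h2
    congr 1
    exact Fin.ext h3
  · simp

/-- the scalar on one cycle is in the centralizer -/
theorem scal_comm {e n : ℕ} (L : List (ℕ × ZMod e)) (φ : XL L ≃ Fin n) (A : XL L → ZMod e)
    (i : Fin L.length) :
    mkW φ (fun x => if x.1 = i then 1 else 0) 1 * mkW φ A (rotL L) =
      mkW φ A (rotL L) * mkW φ (fun x => if x.1 = i then 1 else 0) 1 := by
  rw [mkW_mul, mkW_mul, one_mul, mul_one]
  congr 1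
  funext ⟨k, s⟩
  have h1 : (rotL L).symm ⟨k, s⟩ = ⟨k, (finRotate _).symm s⟩ := rfl
  have h2 : (1 : Equiv.Perm (XL L)).symm ⟨k, s⟩ = ⟨k, s⟩ := rfl
  rw [h1, h2, add_comm]

theorem sum_cycle {M : Type*} [AddCommMonoid M] {e : ℕ} (L : List (ℕ × ZMod e))
    (i : Fin L.length) (f : XL L → M) :
    ∑ x : XL L, (if x.1 = i then f x else 0) = ∑ s, f ⟨i, s⟩ := by
  rw [Fintype.sum_sigma, Finset.sum_eq_single i]
  · simp
  · intro k _ hk; simp [hk]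
  · simp

theorem scal_sum {e p n : ℕ} (hp : p ∣ e) (L : List (ℕ × ZMod e)) (φ : XL L ≃ Fin n)
    (i : Fin L.length) :
    wsumHom e p n hp (mkW φ (fun x => if x.1 = i then 1 else 0) 1) =
      Multiplicative.ofAdd ((L.get i).1 : ZMod p) := by
  rw [wsum_mkW]
  congr 1
  simp only [apply_ite, map_one, map_zero]
  rw [sum_cycle L i (fun _ => (1 : ZMod p))]
  simp

/-- a single cycle is in the centralizer -/
theorem cyc_comm {e n : ℕ} (L : List (ℕ × ZMod e)) (φ : XL L ≃ Fin n) (A : XL L → ZMod e)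
    (i : Fin L.length) :
    mkW φ (fun x => if x.1 = i then A x else 0)
        (Equiv.sigmaCongrRight fun k => if k = i then finRotate _ else 1) * mkW φ A (rotL L) =
      mkW φ A (rotL L) * mkW φ (fun x => if x.1 = i then A x else 0)
        (Equiv.sigmaCongrRight fun k => if k = i then finRotate _ else 1) := by
  rw [mkW_mul, mkW_mul]
  congr 1
  · funext ⟨k, s⟩
    have h1 : (rotL L).symm ⟨k, s⟩ = ⟨k, (finRotate _).symm s⟩ := rfl
    have h2 : (Equiv.sigmaCongrRight fun k : Fin L.length => if k = i then
      finRotate (L.get k).1 else 1).symm ⟨k, s⟩ =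
        ⟨k, (if k = i then finRotate (L.get k).1 else 1 : Equiv.Perm _).symm s⟩ := rfl
    rw [h1, h2]
    by_cases h : k = i
    · simp [h]
    · simp only [h, if_false]
      change (0 : ZMod e) + A ⟨k, s⟩ = A ⟨k, s⟩ + 0
      rw [add_comm]
  · ext1 ⟨k, s⟩
    change (⟨k, (if k = i then finRotate (L.get k).1 else 1 : Equiv.Perm _) (finRotate _ s)⟩ : XL L)
     = ⟨k, finRotate _ ((if k = i then finRotate (L.get k).1 else 1 : Equiv.Perm _) s)⟩
    by_cases h : k = i
    · simp [h]
    · simp [h]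

theorem aexc_zero {e : ℕ} [NeZero e] (L : List (ℕ × ZMod e)) (x : XL L) :
    aexc e L 0 x = if (x.2 : ℕ) = 0 then (L.get x.1).2 else 0 := by
  simp only [aexc, sub_zero, ite_self, add_zero]

theorem sum_aexc_zero {e : ℕ} [NeZero e] (L : List (ℕ × ZMod e)) (i : Fin L.length)
    (hpos : 0 < (L.get i).1) :
    ∑ s, aexc e L 0 ⟨i, s⟩ = (L.get i).2 := by
  simp only [aexc_zero]
  rw [Finset.sum_eq_single ⟨0, hpos⟩]
  · simp
  · intro b _ hb
    rw [if_neg]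
    intro h
    exact hb (Fin.ext h)
  · simp

theorem cyc_sum {e p n : ℕ} [NeZero e] (hp : p ∣ e) (L : List (ℕ × ZMod e)) (φ : XL L ≃ Fin n)
    (i : Fin L.length) (hpos : 0 < (L.get i).1) (s) :
    wsumHom e p n hp (mkW φ (fun x => if x.1 = i then aexc e L 0 x else 0) s) =
      Multiplicative.ofAdd (ZMod.castHom hp (ZMod p) (L.get i).2) := by
  rw [wsum_mkW]
  congr 1
  rw [← map_sum, sum_cycle L i, sum_aexc_zero L i hpos]

/-- sums of centralizing elements -/
theorem cent_sum {e p h n : ℕ} [NeZero e] (hp : p ∣ e) (hh : h ∣ p) (L : List (ℕ × ZMod e))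
    (φ : XL L ≃ Fin n) (hL : ∀ i, h ∣ (L.get i).1)
    (hk : ∀ i, ZMod.castHom (hh.trans hp) (ZMod h) (L.get i).2 = 0) (v : Wt e n)
    (hv : v * mkW φ (aexc e L 0) (rotL L) = mkW φ (aexc e L 0) (rotL L) * v) :
    ZMod.castHom hh (ZMod h) (wsumHom e p n hp v).toAdd = 0 := by
  obtain ⟨c, y, rfl⟩ := mkW_surj φ v
  rw [mkW_mul, mkW_mul] at hv
  have h1 := (mkW_inj φ hv).1
  have hA : ∀ x, ZMod.castHom (hh.trans hp) (ZMod h) (aexc e L 0 x) = 0 := by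
    intro x
    rw [aexc_zero]
    split_ifs
    · exact hk _
    · exact map_zero _
  rw [wsum_mkW, toAdd_ofAdd, map_sum]
  have h3 : ∀ z : ZMod e, ZMod.castHom hh (ZMod h) (ZMod.castHom hp (ZMod p) z) =
      ZMod.castHom (hh.trans hp) (ZMod h) z := by
    intro z
    exact DFunLike.congr_fun (RingHom.ext_zmod ((ZMod.castHom hh (ZMod h)).comp
      (ZMod.castHom hp (ZMod p))) (ZMod.castHom (hh.trans hp) (ZMod h))) z
  simp only [h3]
  have h4 : ∀ x, ZMod.castHom (hh.trans hp) (ZMod h) (c (rotL L x)) =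
      ZMod.castHom (hh.trans hp) (ZMod h) (c x) := by
    intro x
    have h5 := congrArg (ZMod.castHom (hh.trans hp) (ZMod h)) (congrFun h1 (rotL L x))
    rw [map_add, map_add, hA, hA, add_zero, zero_add, Equiv.symm_apply_apply] at h5
    exact h5
  rw [Fintype.sum_sigma]
  refine Finset.sum_eq_zero fun i _ => ?_
  have h6 : ∀ t (ht : t < (L.get i).1),
      ZMod.castHom (hh.trans hp) (ZMod h) (c ⟨i, ⟨t, ht⟩⟩) =
      ZMod.castHom (hh.trans hp) (ZMod h) (c ⟨i, ⟨0, by omega⟩⟩) := by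
    intro t
    induction t with
    | zero => intro _; rfl
    | succ t ih =>
      intro ht
      rw [← ih (by omega), ← h4 ⟨i, ⟨t, by omega⟩⟩]
      have h7 : rotL L ⟨i, ⟨t, by omega⟩⟩ = ⟨i, finRotate _ ⟨t, by omega⟩⟩ := rfl
      rw [h7, rot_lt ht]
  by_cases h0 : (L.get i).1 = 0
  · rw [Finset.sum_eq_zero]
    intro s
    exact absurd s.2 (by omega)
  · have h8 : ∀ s : Fin (L.get i).1, ZMod.castHom (hh.trans hp) (ZMod h) (c ⟨i, s⟩) =
      ZMod.castHom (hh.trans hp) (ZMod h) (c ⟨i, ⟨0, by omega⟩⟩) := fun s => h6 s.1 s.2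
    rw [Finset.sum_congr rfl fun s _ => h8 s, Finset.sum_const, Finset.card_univ, Fintype.card_fin,
      nsmul_eq_mul, (ZMod.natCast_eq_zero_iff _ _).2 (hL i), zero_mul]

theorem part_ii (e p n : ℕ) [NeZero e] [NeZero n] (hp : p ∣ e) (β : ZMod e → Multiset ℕ)
    (b b' : ZMod e) (hβ : IsEPartition e n β) :
    IsConjW e p n hp (wrep e n β b) (wrep e n β b') ↔
        ∀ j < p, fjInv e p hp β b j = fjInv e p hp β b' j := by
  have hp0 : p ≠ 0 := by
    rintro rfl
    exact NeZero.ne e (Nat.eq_zero_of_zero_dvd hp)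
  haveI : NeZero p := ⟨hp0⟩
  obtain ⟨φ, hφ⟩ := exists_phi hβ
  have hmem : ∀ i, ((partsList e β).get i).1 ∈ β ((partsList e β).get i).2 := by
    intro i
    rw [← partsList_mem]
    exact List.get_mem _ _
  have hmem2 : ∀ k, ∀ r ∈ β k, ∃ i, (partsList e β).get i = (r, k) := by
    intro k r hr
    rw [← partsList_mem] at hr
    exact List.get_of_mem hr
  generalize partsList e β = L at *
  have hpos : ∀ i, 0 < (L.get i).1 := fun i => hβ.1 _ _ (hmem i)
  set w0 := mkW φ (aexc e L 0) (rotL L) with hw0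
  set T : ZMod e → Wt e n := fun b => mkW φ (tw L b) 1 with hTdef
  have hT : ∀ b, T b * w0 = wrep e n β b * T b := fun b => by rw [hφ]; exact tw_conj L φ b
  have hTs : ∀ b, wsumHom e p n hp (T b) = Multiplicative.ofAdd (ZMod.castHom hp (ZMod p) b) :=
    fun b => tw_sum hp L hpos φ b
  have hconj : IsConjW e p n hp (wrep e n β b) (wrep e n β b') ↔
      ∃ v, v * w0 = w0 * v ∧ wsumHom e p n hp v =
        Multiplicative.ofAdd (ZMod.castHom hp (ZMod p) (b - b')) := by
    constructor
    · rintro ⟨u, hu, h⟩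
      have hu1 : wsumHom e p n hp u = 1 := hu
      refine ⟨(T b')⁻¹ * u * T b, ?_, ?_⟩
      · have h1 : u * wrep e n β b = wrep e n β b' * u := by rw [← h]; group
        have h2 : (T b')⁻¹ * wrep e n β b' = w0 * (T b')⁻¹ := by
          rw [inv_mul_eq_iff_eq_mul, ← mul_assoc, hT]; group
        calc (T b')⁻¹ * u * T b * w0 = (T b')⁻¹ * (u * (T b * w0)) := by group
          _ = (T b')⁻¹ * (u * wrep e n β b) * T b := by rw [hT]; group
          _ = (T b')⁻¹ * wrep e n β b' * u * T b := by rw [h1]; group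
          _ = _ := by rw [h2]; group
      · rw [map_mul, map_mul, map_inv, hu1, hTs, hTs, mul_one, map_sub, ← ofAdd_neg, ← ofAdd_add]
        congr 1; ring
    · rintro ⟨v, hv, hs⟩
      refine ⟨T b' * v * (T b)⁻¹, ?_, ?_⟩
      · change wsumHom e p n hp _ = 1
        rw [map_mul, map_mul, map_inv, hs, hTs, hTs, map_sub, ← ofAdd_neg, ← ofAdd_add,
          ← ofAdd_add, ← ofAdd_zero]
        congr 1; ring
      · have h2 : (T b)⁻¹ * wrep e n β b = w0 * (T b)⁻¹ := by
          rw [inv_mul_eq_iff_eq_mul, ← mul_assoc, hT]; group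
        calc T b' * v * (T b)⁻¹ * wrep e n β b * (T b' * v * (T b)⁻¹)⁻¹ 
            = T b' * v * ((T b)⁻¹ * wrep e n β b) * (T b' * v * (T b)⁻¹)⁻¹ := by group
          _ = T b' * (v * w0) * v⁻¹ * (T b')⁻¹ := by rw [h2]; group
          _ = T b' * w0 * (T b')⁻¹ := by rw [hv]; group
          _ = _ := by rw [hT]; group
  rw [hconj]
  have hcast : ∀ {h : ℕ} (hh : h ∣ e) (k : ZMod e), ZMod.castHom hh (ZMod h) k = (k.val : ZMod h) := by
    intro h hh k
    conv_lhs => rw [← ZMod.natCast_zmod_val k]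
    exact map_natCast _ _
  constructor
  · rintro ⟨v, hv, hs⟩ j hj
    unfold fjInv
    split_ifs with hc
    · have hh : hOrd p j ∣ p := by
        rw [hOrd, ZMod.addOrderOf_coe _ hp0]
        exact Nat.div_dvd_of_dvd (Nat.gcd_dvd_left _ _)
      have h0 := cent_sum hp hh L φ (fun i => hc.1 _ _ (hmem i)) (fun i => by
        rw [hcast, ZMod.natCast_eq_zero_iff]
        apply hc.2
        intro h
        have := hmem i
        rw [h] at this
        simp at this) v hv
      rw [hs, toAdd_ofAdd] at h0
      rw [← sub_eq_zero, ← sub_mul, ← map_sub]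
      generalize ZMod.castHom hp (ZMod p) (b - b') = z at *
      rw [← ZMod.natCast_zmod_val z, map_natCast, ZMod.natCast_eq_zero_iff, hOrd,
        addOrderOf_dvd_iff_nsmul_eq_zero, nsmul_eq_mul] at h0
      rw [← ZMod.natCast_zmod_val z]
      exact h0
    · rfl
  · intro hf
    let K : AddSubgroup ℤ :=
      { carrier := {z | ∃ v, v * w0 = w0 * v ∧ wsumHom e p n hp v = Multiplicative.ofAdd (z : ZMod p)}
        zero_mem' := ⟨1, by simp, by simp⟩
        add_mem' := by
          rintro x y ⟨v, hv, hvs⟩ ⟨u, hu, hus⟩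
          refine ⟨v * u, ?_, ?_⟩
          · rw [mul_assoc, hu, ← mul_assoc, hv, mul_assoc]
          · rw [map_mul, hvs, hus, ← ofAdd_add, Int.cast_add]
        neg_mem' := by
          rintro x ⟨v, hv, hvs⟩
          refine ⟨v⁻¹, ?_, ?_⟩
          · rw [inv_mul_eq_iff_eq_mul, ← mul_assoc, hv]; group
          · rw [map_inv, hvs, ← ofAdd_neg, Int.cast_neg] }
    have hKm : ∀ z : ℤ, z ∈ K ↔ ∃ v, v * w0 = w0 * v ∧
      wsumHom e p n hp v = Multiplicative.ofAdd (z : ZMod p) := fun z => Iff.rfl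
    obtain ⟨a, ha⟩ := Int.subgroup_cyclic K
    have hKg : ∀ z : ℕ, (z : ℤ) ∈ K ↔ a.natAbs ∣ z := by
      intro z
      rw [ha, ← AddSubgroup.zmultiples_eq_closure, Int.mem_zmultiples_iff, Int.natAbs_dvd_natAbs.symm]
      simp
    generalize a.natAbs = g at hKg
    have hgp : g ∣ p := by
      rw [← hKg, hKm]
      exact ⟨1, by simp, by simp⟩
    have hL : ∀ i, g ∣ (L.get i).1 := by
      intro i
      rw [← hKg, hKm]
      exact ⟨_, scal_comm L φ _ i, by rw [scal_sum]; simp⟩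
    have hk : ∀ i, g ∣ (L.get i).2.val := by
      intro i
      rw [← hKg, hKm]
      refine ⟨_, cyc_comm L φ _ i, ?_⟩
      rw [cyc_sum hp L φ i (hpos i), hcast]; simp
    have hg0 : g ≠ 0 := by
      rintro rfl
      exact hp0 (Nat.eq_zero_of_zero_dvd hgp)
    have hfin : g ∣ (b - b').val := by
      by_cases hg1 : g = 1
      · simp [hg1]
      · obtain ⟨j, hj⟩ := hgp
        have hj0 : 0 < j := by
          rcases Nat.eq_zero_or_pos j with h | h
          · subst h; simp at hj; omega
          · exact h
        have hjp : j < p := by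
          rw [hj]
          have : 2 ≤ g := by omega
          nlinarith
        have hord : hOrd p j = g := by
          rw [hOrd, ZMod.addOrderOf_coe _ hp0, Nat.gcd_eq_right ⟨g, by rw [hj]; ring⟩]
          rw [hj]; exact Nat.mul_div_cancel _ hj0
        have hc : Cond261 e p j β := by
          rw [Cond261, hord]
          constructor
          · intro k r hr
            obtain ⟨i, hi⟩ := hmem2 k r hr
            have := hL i
            rwa [hi] at this
          · intro k hk'
            obtain ⟨r, hr⟩ := Multiset.exists_mem_of_ne_zero hk'
            obtain ⟨i, hi⟩ := hmem2 k r hr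
            have := hk i
            rwa [hi] at this
        have h1 := hf j hjp
        rw [fjInv, fjInv, if_pos hc, if_pos hc, ← sub_eq_zero, ← sub_mul, ← map_sub, hcast,
          ← nsmul_eq_mul, ← addOrderOf_dvd_iff_nsmul_eq_zero] at h1
        rw [← hord]; exact h1
    rw [← hKg, hKm] at hfin
    obtain ⟨v, hv, hs⟩ := hfin
    exact ⟨v, hv, by rw [hs, hcast]; simp⟩

/-! ### the `W̃`-class determines `β` -/

theorem rot_iter (r : ℕ) (t : Fin (r + 1)) (s : ℕ) :
    (finRotate (r + 1))^[s] t = t + Fin.ofNat (r + 1) s := by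
  induction s with
  | zero => ext; simp
  | succ s ih =>
    rw [Function.iterate_succ_apply', ih, finRotate_apply]
    ext
    simp [Fin.val_add, add_assoc]

theorem rot_per {r : ℕ} (t : Fin r) (s : ℕ) : (finRotate r)^[s] t = t ↔ r ∣ s := by
  obtain _ | r := r
  · exact t.elim0
  rw [rot_iter, add_eq_left, Fin.ext_iff, Nat.dvd_iff_mod_eq_zero]
  rfl

theorem rot_sum {M : Type*} [AddCommMonoid M] {r : ℕ} (t : Fin r) (f : Fin r → M) :
    ∑ s ∈ Finset.range r, f ((finRotate r)^[s] t) = ∑ u, f u := by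
  obtain _ | r := r
  · exact t.elim0
  simp only [rot_iter]
  rw [Finset.sum_range (fun s : ℕ => f (t + Fin.ofNat (r + 1) s))]
  have h : ∀ i : Fin (r + 1), Fin.ofNat (r + 1) (i : ℕ) = i := fun i => by
    ext; simp [Nat.mod_eq_of_lt i.2]
  simp only [h]
  exact Equiv.sum_comp (Equiv.addLeft t) f

theorem rotL_iter {e : ℕ} (L : List (ℕ × ZMod e)) (i : Fin L.length) (t) (s : ℕ) :
    (rotL L)^[s] ⟨i, t⟩ = ⟨i, (finRotate _)^[s] t⟩ := by
  induction s with
  | zero => rfl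
  | succ s ih =>
    rw [Function.iterate_succ_apply', ih, Function.iterate_succ_apply']
    rfl

theorem rotL_per {e : ℕ} (L : List (ℕ × ZMod e)) (x : XL L) (s : ℕ) :
    (rotL L)^[s] x = x ↔ (L.get x.1).1 ∣ s := by
  obtain ⟨i, t⟩ := x
  rw [rotL_iter, ← rot_per t s]
  constructor
  · intro h
    exact eq_of_heq (Sigma.mk.inj h).2
  · intro h; rw [h]

theorem rotL_sum {e : ℕ} [NeZero e] (L : List (ℕ × ZMod e)) (x : XL L) :
    ∑ s ∈ Finset.range (L.get x.1).1, aexc e L 0 ((rotL L)^[s] x) = (L.get x.1).2 := by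
  obtain ⟨i, t⟩ := x
  simp only [rotL_iter]
  rw [rot_sum t (fun u => aexc e L 0 ⟨i, u⟩), sum_aexc_zero L i t.pos]

theorem card_points {e : ℕ} (L : List (ℕ × ZMod e)) (a : ℕ × ZMod e) :
    ∑ x : XL L, (if L.get x.1 = a then 1 else 0) = L.count a * a.1 := by
  rw [Fintype.sum_sigma]
  have h : ∀ i : Fin L.length, (∑ y : Fin (L.get i).1, if L.get i = a then 1 else 0) =
      if L.get i = a then a.1 else 0 := by
    intro i
    split_ifs with h
    · simp [← h]
    · simp
  simp only [h]
  rw [← List.sum_ofFn, ← Function.comp_def (fun z => if z = a then a.1 else 0) L.get,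
    ← List.map_ofFn, List.ofFn_get]
  induction L with
  | nil => simp
  | cons b L ih =>
    rw [List.map_cons, List.sum_cons, ih, List.count_cons]
    · by_cases h : b = a
      · simp [h]; ring
      · simp [h]
    · intro i
      split_ifs with h
      · simp [← h]
      · simp

theorem class_inj {e n : ℕ} [NeZero e] (L L' : List (ℕ × ZMod e)) (φ : XL L ≃ Fin n)
    (φ' : XL L' ≃ Fin n) (u : Wt e n)
    (hu : u * mkW φ (aexc e L 0) (rotL L) = mkW φ' (aexc e L' 0) (rotL L') * u)
    (a : ℕ × ZMod e) (ha : 0 < a.1) : L.count a = L'.count a := by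
  set y : XL L ≃ XL L' := φ.trans (u.right.trans φ'.symm) with hy
  have h1 : ∀ x, y (rotL L x) = rotL L' (y x) := by
    intro x
    have h := congrArg (fun w : Wt e n => φ'.symm (w.right (φ x))) hu
    simpa [mkW, hy] using h
  set c : XL L' → ZMod e := fun z => (u.left (φ' z)).toAdd with hc
  have h2 : ∀ x, c (rotL L' (y x)) + aexc e L 0 (rotL L x) =
      aexc e L' 0 (rotL L' (y x)) + c (y x) := by
    intro x
    have h := congrArg (fun w : Wt e n => (w.left (φ' (rotL L' (y x)))).toAdd) hu
    have e1 : ((u * mkW φ (aexc e L 0) (rotL L)).left (φ' (rotL L' (y x)))).toAdd =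
      c (rotL L' (y x)) + aexc e L 0 (φ.symm (u.right.symm (φ' (rotL L' (y x))))) := rfl
    have e2 : ((mkW φ' (aexc e L' 0) (rotL L') * u).left (φ' (rotL L' (y x)))).toAdd =
      aexc e L' 0 (φ'.symm (φ' (rotL L' (y x)))) +
      (u.left ((mkW φ' (aexc e L' 0) (rotL L')).right.symm (φ' (rotL L' (y x))))).toAdd := rfl
    have e3 : (mkW φ' (aexc e L' 0) (rotL L')).right.symm (φ' (rotL L' (y x))) = φ' (y x) := by
      rw [Equiv.symm_apply_eq]
      simp [mkW]
    have e4 : φ.symm (u.right.symm (φ' (rotL L' (y x)))) = rotL L x := by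
      rw [← h1]
      simp [hy]
    beta_reduce at h
    rw [e1, e2, e3, e4, Equiv.symm_apply_apply] at h
    exact h
  have h3 : ∀ s x, y ((rotL L)^[s] x) = (rotL L')^[s] (y x) := by
    intro s x
    induction s with
    | zero => rfl
    | succ s ih => rw [Function.iterate_succ_apply', h1, ih, Function.iterate_succ_apply']
  have hr : ∀ x, (L.get x.1).1 = (L'.get (y x).1).1 := by
    intro x
    apply Nat.dvd_antisymm
    · rw [← rotL_per, ← y.apply_eq_iff_eq, h3, rotL_per]
    · rw [← rotL_per, ← h3, y.apply_eq_iff_eq, rotL_per]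
  have hk : ∀ x, (L.get x.1).2 = (L'.get (y x).1).2 := by
    intro x
    have h4 : ∀ N, ∑ s ∈ Finset.range N, aexc e L' 0 ((rotL L')^[s] (rotL L' (y x))) =
      ∑ s ∈ Finset.range N, aexc e L 0 ((rotL L)^[s] (rotL L x)) +
        (c ((rotL L')^[N] (y x)) - c (y x)) := by
      intro N
      induction N with
      | zero => simp
      | succ N ih =>
        rw [Finset.sum_range_succ, Finset.sum_range_succ, ih]
        have h5 := h2 ((rotL L)^[N] x)
        rw [h3] at h5
        rw [← Function.iterate_succ_apply, ← Function.iterate_succ_apply,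
          Function.iterate_succ_apply', Function.iterate_succ_apply']
        linear_combination -h5
    have h6 := h4 (L'.get (y x).1).1
    rw [(rotL_per L' (y x) _).2 dvd_rfl, sub_self, add_zero, ← hr x] at h6
    have e1 := rotL_sum L (rotL L x)
    have e2 := rotL_sum L' (rotL L' (y x))
    have e3 : (rotL L x).1 = x.1 := rfl
    have e4 : (rotL L' (y x)).1 = (y x).1 := rfl
    rw [e3] at e1
    rw [e4, ← hr x] at e2
    rw [← e1, ← e2, h6]
  have hg : ∀ x, L.get x.1 = L'.get (y x).1 := fun x => Prod.ext (hr x) (hk x)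
  have h7 := card_points L a
  simp only [hg] at h7
  rw [Equiv.sum_comp y (fun z => if L'.get z.1 = a then 1 else 0), card_points] at h7
  exact (Nat.eq_of_mul_eq_mul_right ha h7).symm

theorem class_eq {e n : ℕ} [NeZero e] {β β' : ZMod e → Multiset ℕ} (h : IsEPartition e n β)
    (h' : IsEPartition e n β') (b b' : ZMod e) (u : Wt e n)
    (hu : u * wrep e n β b * u⁻¹ = wrep e n β' b') : β = β' := by
  obtain ⟨φ, hφ⟩ := exists_phi h
  obtain ⟨φ', hφ'⟩ := exists_phi h'
  rw [hφ, hφ', mul_inv_eq_iff_eq_mul] at hu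
  have t1 := tw_conj _ φ b
  have t2 := tw_conj _ φ' b'
  have t3 : (mkW φ' (tw _ b') 1)⁻¹ * mkW φ' (aexc e (partsList e β') b') (rotL _) =
      mkW φ' (aexc e (partsList e β') 0) (rotL _) * (mkW φ' (tw _ b') 1)⁻¹ := by
    rw [inv_mul_eq_iff_eq_mul, ← mul_assoc, eq_mul_inv_iff_mul_eq, t2]
  have key := class_inj _ _ φ φ' ((mkW φ' (tw _ b') 1)⁻¹ * u * mkW φ (tw _ b) 1) (by
    rw [mul_assoc, t1, mul_assoc, ← mul_assoc u, hu, mul_assoc _ u, ← mul_assoc, t3]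
    simp only [mul_assoc])
  funext k
  ext r
  rcases Nat.eq_zero_or_pos r with rfl | hr
  · rw [Multiset.count_eq_zero_of_notMem, Multiset.count_eq_zero_of_notMem]
    · exact fun hh => absurd (h'.1 k 0 hh) (lt_irrefl _)
    · exact fun hh => absurd (h.1 k 0 hh) (lt_irrefl _)
  · have := key (r, k) hr
    rwa [partsList_count, partsList_count] at this

/-! ### power sums -/

theorem exp_iff {e p d : ℕ} [NeZero e] (hp : p ∣ e) (hd : d = e / p) (D b b' : ZMod e) (j : ℕ) :
    -((D + b) * ((j * d : ℕ) : ZMod e)) = -((D + b') * ((j * d : ℕ) : ZMod e)) ↔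
      ZMod.castHom hp (ZMod p) b * (j : ZMod p) = ZMod.castHom hp (ZMod p) b' * (j : ZMod p) := by
  have he : e = p * d := by rw [hd, Nat.mul_div_cancel' hp]
  have hd0 : 0 < d := Nat.pos_of_ne_zero (by rintro rfl; exact NeZero.ne e (by simpa using he))
  rw [neg_inj, ← sub_eq_zero, ← sub_eq_zero (a := ZMod.castHom hp (ZMod p) b * (j : ZMod p)),
    ← sub_mul, ← sub_mul, ← map_sub, add_sub_add_left_eq_sub]
  generalize b - b' = z
  obtain ⟨v, rfl⟩ : ∃ v : ℕ, z = (v : ZMod e) := ⟨z.val, (ZMod.natCast_zmod_val z).symm⟩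
  rw [map_natCast, ← Nat.cast_mul, ← Nat.cast_mul, ZMod.natCast_eq_zero_iff,
    ZMod.natCast_eq_zero_iff, ← mul_assoc]
  conv_lhs => rw [he]
  exact Nat.mul_dvd_mul_iff_right hd0

theorem zmpow_inj {e : ℕ} [NeZero e] {ζ : ℂ} (hζ : IsPrimitiveRoot ζ e) {c c' : ZMod e}
    (h : zmpow e ζ c = zmpow e ζ c') : c = c' :=
  ZMod.val_injective e (hζ.pow_inj (ZMod.val_lt c) (ZMod.val_lt c') h)

theorem pBracket_ne {e p d n : ℕ} [NeZero e] [NeZero n] (hp : p ∣ e) (hd : d = e / p)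
    (ζ : ℂ) (m : ZMod e → ℕ) (hmn : ∀ k, n ≤ m k) (j : ℕ) (β : ZMod e → Multiset ℕ) :
    0 < hOrd p j ∧ ∃ xv : BIdx e m → ℂ, pBracket e p d ζ m xv j β = 1 := by
  have he : e = p * d := by rw [hd, Nat.mul_div_cancel' hp]
  have hd0 : 0 < d := Nat.pos_of_ne_zero (by rintro rfl; exact NeZero.ne e (by simpa using he))
  have hp0 : 0 < p := Nat.pos_of_ne_zero (by rintro rfl; exact NeZero.ne e (by simpa using he))
  haveI : NeZero p := ⟨hp0.ne'⟩
  have hh0 : 0 < hOrd p j := addOrderOf_pos _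
  have hhp : hOrd p j ∣ p := by
    have := addOrderOf_dvd_card (x := (j : ZMod p))
    rwa [ZMod.card] at this
  have hE0 : 0 < Esys p d j := Nat.mul_pos (Nat.div_pos (Nat.le_of_dvd hp0 hhp) hh0) hd0
  have hEe : Esys p d j ∣ e := by
    rw [Esys]
    conv_rhs => rw [he]
    exact Nat.mul_dvd_mul (Nat.div_dvd_of_dvd hhp) dvd_rfl
  have hEj : Esys p d j ∣ j * d := by
    rw [Esys]
    refine Nat.mul_dvd_mul ?_ dvd_rfl
    have h1 : hOrd p j • (j : ZMod p) = 0 := addOrderOf_nsmul_eq_zero _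
    rw [nsmul_eq_mul, ← Nat.cast_mul, ZMod.natCast_eq_zero_iff] at h1
    have h9 : hOrd p j * (p / hOrd p j) ∣ hOrd p j * j := by
      rwa [Nat.mul_div_cancel' hhp]
    exact Nat.dvd_of_mul_dvd_mul_left hh0 h9
  refine ⟨hh0, fun x => if x.2.val = 0 ∧ Esys p d j ∣ x.1.val then 1 else 0, ?_⟩
  set xv : BIdx e m → ℂ := fun x => if x.2.val = 0 ∧ Esys p d j ∣ x.1.val then 1 else 0 with hxv
  have hn : 0 < n := Nat.pos_of_ne_zero (NeZero.ne n)
  have h1 : ∀ k i, xval e m xv k i = if i = 0 ∧ Esys p d j ∣ k.val then 1 else 0 := by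
    intro k i
    have := hmn k
    unfold xval
    split_ifs with h2 h3 h3
    · simp [hxv, h3]
    · simp only [hxv]; rw [if_neg h3]
    · omega
    · rfl
  have h2 : ∀ k s, Esys p d j ∣ (((k + s * j * d : ℕ) : ZMod e)).val ↔ Esys p d j ∣ k := by
    intro k s
    rw [ZMod.val_natCast, Nat.dvd_mod_iff hEe, mul_assoc]
    exact (Nat.dvd_add_left (Dvd.dvd.mul_left hEj s))
  have h3 : ∀ k i, Xvar e p d m xv j k i = if i = 0 ∧ Esys p d j ∣ k then 1 else 0 := by
    intro k i
    simp only [Xvar, h1, h2]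
    split_ifs
    · simp
    · rw [Finset.prod_const, Finset.card_range, zero_pow hh0.ne']
  have h4 : ∀ u i r, pGenSys u (Esys p d j) (mmX e m) (vvX e p d m xv j) i r = 1 := by
    intro u i r
    unfold pGenSys
    split_ifs with hr
    · rfl
    · simp only [vvX, h3]
      rw [Finset.sum_eq_single 0, Finset.sum_eq_single 0]
      · simp
      · intro s _ hs; simp [hs, hr]
      · intro h
        exact absurd (Finset.mem_range.2 (lt_of_lt_of_le hn (hmn _))) h
      · intro k hk hk0
        have : ¬ Esys p d j ∣ k := fun h => by
          have := Nat.le_of_dvd (Nat.pos_of_ne_zero hk0) h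
          have := Finset.mem_range.1 hk
          omega
        simp [this, hr]
      · intro h
        exact absurd (Finset.mem_range.2 hE0) h
  simp [pBracket, pAlphaSys, h4]

theorem pTuple_iff {e p d n : ℕ} [NeZero e] [NeZero n] (hp : p ∣ e) (hd : d = e / p)
    {ζ : ℂ} (hζ : IsPrimitiveRoot ζ e) (m : ZMod e → ℕ) (hmn : ∀ k, n ≤ m k) (j : ℕ)
    (β : ZMod e → Multiset ℕ) (b b' : ZMod e) :
    (∀ xv : BIdx e m → ℂ, pTuple e p d ζ m xv β b j = pTuple e p d ζ m xv β b' j) ↔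
      fjInv e p hp β b j = fjInv e p hp β b' j := by
  unfold pTuple fjInv
  by_cases hc : Cond261 e p j β
  · simp only [if_pos hc]
    rw [← exp_iff hp hd (Delta e β : ZMod e) b b' j]
    constructor
    · intro h
      obtain ⟨h0, xv, hxv⟩ := pBracket_ne hp hd ζ m hmn j β
      have h1 := h xv
      rw [hxv, mul_one, mul_one] at h1
      have h2 : ((hOrd p j : ℕ) : ℂ) ^ lenBracket e p d j β ≠ 0 :=
        pow_ne_zero _ (Nat.cast_ne_zero.2 h0.ne')
      exact zmpow_inj hζ (mul_left_cancel₀ h2 h1)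
    · intro h xv
      rw [h]
  · simp [hc]

theorem choose_xv {e n : ℕ} [NeZero e] {ζ : ℂ} (hζ : IsPrimitiveRoot ζ e) (m : ZMod e → ℕ)
    (hmn : ∀ k, n ≤ m k) (T : ℕ → ℕ → ℂ) : ∃ xv : BIdx e m → ℂ, ∀ k < e, ∀ r, 0 < r → r ≤ n →
      ∑ l ∈ Finset.range e, ζ ^ (k * l) * ∑ s ∈ Finset.range (m (l : ZMod e)),
        xval e m xv (l : ZMod e) s ^ r = T k r := by
  have hV : IsUnit (Matrix.vandermonde (fun k : Fin e => ζ ^ (k : ℕ))) := by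
    rw [Matrix.isUnit_iff_isUnit_det, isUnit_iff_ne_zero, Matrix.det_vandermonde_ne_zero_iff]
    intro a b h
    exact Fin.ext (hζ.pow_inj a.2 b.2 h)
  have hs := Matrix.mulVec_surjective_iff_isUnit.2 hV
  choose y hy using fun r => hs (fun k : Fin e => T k r)
  choose x hx using fun l : Fin e => psum_surj n (fun r => y r l)
  refine ⟨fun z => if h : z.2.val < n then x ⟨z.1.val, ZMod.val_lt _⟩ ⟨z.2.val, h⟩ else 0, ?_⟩
  intro k hk r hr hrn
  rw [← congrFun (hy r) ⟨k, hk⟩, Finset.sum_range]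
  simp only [Matrix.mulVec, dotProduct, Matrix.vandermonde_apply]
  refine Finset.sum_congr rfl fun l _ => ?_
  rw [pow_mul]
  congr 1
  rw [← hx l r hr hrn]
  have hsub : Finset.range n ⊆ Finset.range (m (l : ZMod e)) :=
    Finset.range_subset_range.2 (hmn _)
  rw [← Finset.sum_subset hsub, Finset.sum_range]
  · refine Finset.sum_congr rfl fun i _ => ?_
    congr 1
    unfold xval
    rw [dif_pos (lt_of_lt_of_le i.2 (hmn _))]
    beta_reduce
    rw [dif_pos i.2]
    congr 1
    congr 1
    simp [ZMod.val_natCast, Nat.mod_eq_of_lt l.2]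
  · intro s hs1 hs2
    rw [Finset.mem_range] at hs1 hs2
    unfold xval
    rw [dif_pos hs1]
    beta_reduce
    rw [dif_neg hs2, zero_pow hr.ne']

theorem pTuple_zero {e p d : ℕ} [NeZero e] (hp : p ∣ e) (hd : d = e / p)
    (ζ : ℂ) (m : ZMod e → ℕ) (xv : BIdx e m → ℂ) (β : ZMod e → Multiset ℕ) (b : ZMod e) :
    pTuple e p d ζ m xv β b 0 = ∏ k ∈ Finset.range e, ((β (k : ZMod e)).map fun r =>
      if r = 0 then 1 else ∑ l ∈ Finset.range e, ζ ^ (k * l) *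
        ∑ s ∈ Finset.range (m (l : ZMod e)), xval e m xv (l : ZMod e) s ^ r).prod := by
  have hh : hOrd p 0 = 1 := by simp [hOrd]
  have hE : Esys p d 0 = e := by rw [Esys, hh, Nat.div_one, hd, Nat.mul_div_cancel' hp]
  have hc : Cond261 e p 0 β := by simp [Cond261, hh]
  rw [pTuple, if_pos hc, pBracket, hh, hE]
  simp only [Nat.cast_one, one_pow, zero_mul, Nat.cast_zero, mul_zero, neg_zero, zmpow,
    ZMod.val_zero, pow_zero, one_mul, pAlphaSys, pow_one]
  refine Finset.prod_congr rfl fun k hk => ?_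
  rw [bracketF, hE, if_pos (Finset.mem_range.1 hk)]
  simp [pGenSys, hh, vvX, mmX, Xvar]

theorem beta_eq {e p d n : ℕ} [NeZero e] (hp : p ∣ e) (hd : d = e / p)
    {ζ : ℂ} (hζ : IsPrimitiveRoot ζ e) (m : ZMod e → ℕ) (hmn : ∀ k, n ≤ m k)
    {β β' : ZMod e → Multiset ℕ} (hβ : IsEPartition e n β) (hβ' : IsEPartition e n β')
    (b b' : ZMod e)
    (h : ∀ xv : BIdx e m → ℂ, pTuple e p d ζ m xv β b 0 = pTuple e p d ζ m xv β' b' 0) :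
    β = β' := by
  funext k0
  ext r0
  obtain ⟨xv, hxv⟩ := choose_xv hζ m hmn (fun k r => if k = k0.val ∧ r = r0 then 2 else 1)
  have key : ∀ (γ : ZMod e → Multiset ℕ) (c : ZMod e), IsEPartition e n γ →
      pTuple e p d ζ m xv γ c 0 = 2 ^ (γ k0).count r0 := by
    intro γ c hγ
    rw [pTuple_zero hp hd]
    have h1 : ∀ k ∈ Finset.range e, ((γ (k : ZMod e)).map fun r =>
      if r = 0 then 1 else ∑ l ∈ Finset.range e, ζ ^ (k * l) *
        ∑ s ∈ Finset.range (m (l : ZMod e)), xval e m xv (l : ZMod e) s ^ r).prod =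
        if k = k0.val then (2 : ℂ) ^ (γ k0).count r0 else 1 := by
      intro k hk
      have h2 : ∀ r ∈ γ (k : ZMod e), (if r = 0 then 1 else ∑ l ∈ Finset.range e, ζ ^ (k * l) *
        ∑ s ∈ Finset.range (m (l : ZMod e)), xval e m xv (l : ZMod e) s ^ r) =
          if k = k0.val ∧ r = r0 then 2 else 1 := by
        intro r hr
        have hr0 := hγ.1 _ r hr
        have hrn : r ≤ n := by
          rw [← hγ.2]
          exact (Multiset.le_sum_of_mem hr).trans
            (Finset.single_le_sum (f := fun k => (γ k).sum) (fun _ _ => Nat.zero_le _)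
              (Finset.mem_univ (k : ZMod e)))
        rw [if_neg hr0.ne', hxv k (Finset.mem_range.1 hk) r hr0 hrn]
      rw [Multiset.map_congr rfl h2]
      split_ifs with hkk
      · subst hkk
        rw [ZMod.natCast_zmod_val]
        generalize γ k0 = M
        induction M using Multiset.induction with
        | empty => simp
        | cons a M ih =>
          rw [Multiset.map_cons, Multiset.prod_cons, ih, Multiset.count_cons, pow_add]
          by_cases ha : a = r0
          · simp [ha]; ring
          · simp [ha, Ne.symm ha]
      · simp [hkk]
    rw [Finset.prod_congr rfl h1, Finset.prod_ite_eq']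
    simp [ZMod.val_lt]
  have h3 := h xv
  rw [key β b hβ, key β' b' hβ'] at h3
  have h4 : (2 : ℕ) ^ (β k0).count r0 = 2 ^ (β' k0).count r0 := by exact_mod_cast h3
  exact Nat.pow_right_injective le_rfl h4

theorem conjW_symm {e p n : ℕ} {hp : p ∣ e} {w w' : Wt e n} (h : IsConjW e p n hp w w') :
    IsConjW e p n hp w' w := by
  obtain ⟨u, hu, rfl⟩ := h
  exact ⟨u⁻¹, inv_mem hu, by group⟩

theorem conjW_trans {e p n : ℕ} {hp : p ∣ e} {w w' w'' : Wt e n} (h : IsConjW e p n hp w w')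
    (h' : IsConjW e p n hp w' w'') : IsConjW e p n hp w w'' := by
  obtain ⟨u, hu, rfl⟩ := h
  obtain ⟨v, hv, rfl⟩ := h'
  exact ⟨v * u, mul_mem hv hu, by group⟩

/-- Proposition 2.13.
(i) For `w, w' ∈ σ^q W` (in the `W`-orbits of `w_β(b)`, `w_{β'}(b')`), `w`
and `w'` are conjugate under `W` iff `𝐩_w(x) = 𝐩_{w'}(x)`.
(ii) For `w = w_β(b)`, `w' = w_β(b')` in `σ^q W` (i.e. `Δ(β) ≡ q mod p`),
they are conjugate under `W` iff `f_j(w) = f_j(w')` for `j = 0,…,p-1`. -/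
theorem statement7 (e p d n q : ℕ) [NeZero e] [NeZero n] (hp : p ∣ e) (hd : d = e / p)
    (hq : q ∣ e) (hqp : Nat.Coprime (e / q) (e / p))
    (ζ : ℂ) (hζ : IsPrimitiveRoot ζ e)
    (m : ZMod e → ℕ) (hmn : ∀ k, n ≤ m k) (hm : ∀ k, m (k + (d : ZMod e)) = m k) :
    (∀ (w w' : Wt e n) (β β' : ZMod e → Multiset ℕ) (b b' : ZMod e),
      IsEPartition e n β → IsEPartition e n β' →
      (Delta e β : ZMod p) = (q : ZMod p) → (Delta e β' : ZMod p) = (q : ZMod p) →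
      IsConjW e p n hp (wrep e n β b) w → IsConjW e p n hp (wrep e n β' b') w' →
      (IsConjW e p n hp w w' ↔
        ∀ j < p, ∀ xv : BIdx e m → ℂ,
          pTuple e p d ζ m xv β b j = pTuple e p d ζ m xv β' b' j))
    ∧
    (∀ (β : ZMod e → Multiset ℕ) (b b' : ZMod e),
      IsEPartition e n β → (Delta e β : ZMod p) = (q : ZMod p) →
      (IsConjW e p n hp (wrep e n β b) (wrep e n β b') ↔
        ∀ j < p, fjInv e p hp β b j = fjInv e p hp β b' j)) := by
  have hp0 : 0 < p := Nat.pos_of_ne_zero (by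
    rintro rfl
    exact NeZero.ne e (Nat.eq_zero_of_zero_dvd hp))
  refine ⟨?_, fun β b b' hβ _ => part_ii e p n hp β b b' hβ⟩
  intro w w' β β' b b' hβ hβ' _ _ hw hw'
  constructor
  · intro h
    have h1 := conjW_trans (conjW_trans hw h) (conjW_symm hw')
    obtain ⟨u, hu, hu'⟩ := id h1
    obtain rfl := class_eq hβ hβ' b b' u hu'
    intro j hj
    exact (pTuple_iff hp hd hζ m hmn j β b b').2 ((part_ii e p n hp β b b' hβ).1 h1 j hj)
  · intro h
    obtain rfl := beta_eq hp hd hζ m hmn hβ hβ' b b' (h 0 hp0)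
    have h1 := (part_ii e p n hp β b b' hβ).2 fun j hj =>
      (pTuple_iff hp hd hζ m hmn j β b b').1 (h j hj)
    exact conjW_trans (conjW_trans (conjW_symm hw) h1) hw'

end GreenII
end

section
/- Let Θ_q = Σ_{i=0}^{p−1} ζ^{qid} θ^i acting on ℂ[x] via θ(x_j^{(k)}) = x_j^{(k+d)}. Then: (a) Θ_q(p_β) = p·p_β if Δ(β) ≡ q (mod p) and Θ_q(p_β) = 0 otherwise; (b) for α ∈ 𝒫_{n,e} with c = c_{α,p}, Θ_q(s_α) = (p/c)·Σ_{i=0}^{c−1} ζ^{qid} s_{θ^i(α)} if qc ≡ 0 (mod p), and Θ_q(s_α) = 0 otherwise; the same formula as (b) holds with s replaced by the monomial functions m and by the functions q_{·,±}. -/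
/-!
Common framework for formalizing T. Shoji, "Green functions associated to
complex reflection groups, II" (arXiv:math/0105053).

We model:
* `e`-partitions of `n` as functions `ZMod e → Multiset ℕ`;
* the complex reflection group `W̃ = G(e,1,n)` as the semidirect product
  `(Fin n → Multiplicative (ZMod e)) ⋊ Equiv.Perm (Fin n)`, and
  `W = G(e,p,n)` as the kernel of the mod-`p` sum character;
* the tensor space `V^{⊗n}` concretely via matrices indexed by
  `Fin n → (Σ k : ZMod e, Fin (m k))`;
* symmetric functions in the (finitely many, `m k ≥ n`) variables
  `x_i^{(k)}` in evaluated form, i.e. as functions of an assignment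
  `xv : (Σ k : ZMod e, Fin (m k)) → ℂ`.
-/

open scoped BigOperators

attribute [local instance] Classical.propDecidable

namespace GreenII

/-- an `e`-partition as an `ℕ`-indexed tuple (for the generic families with
`E = e` components). -/
noncomputable def liftE (e : ℕ) [NeZero e] (α : ZMod e → Multiset ℕ) : ℕ → Multiset ℕ :=
  fun k => α ((k : ℕ) : ZMod e)

/-- the original variables `x_i^{(k)}` as a generic system with `e` components. -/
noncomputable def vvE (e : ℕ) [NeZero e] (m : ZMod e → ℕ) (xv : BIdx e m → ℂ) : ℕ → ℕ → ℂ :=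
  fun k i => xval e m xv ((k : ℕ) : ZMod e) i

/-- Product over `range e` as a product over `ZMod e`. -/
theorem prod_range_zmod (e : ℕ) [NeZero e] (G : ZMod e → ℂ) :
    ∏ k ∈ Finset.range e, G ((k : ℕ) : ZMod e) = ∏ k : ZMod e, G k := by
  refine Finset.prod_bij (fun k _ => ((k : ℕ) : ZMod e)) (fun _ _ => Finset.mem_univ _) ?_ ?_
    (fun _ _ => rfl)
  · intro a ha b hb h
    have := congrArg ZMod.val h
    rwa [ZMod.val_natCast_of_lt (Finset.mem_range.1 ha),
      ZMod.val_natCast_of_lt (Finset.mem_range.1 hb)] at this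
  · intro b _
    exact ⟨b.val, Finset.mem_range.2 (ZMod.val_lt b), ZMod.natCast_zmod_val b⟩

theorem sum_range_zmod {M : Type*} [AddCommMonoid M] (e : ℕ) [NeZero e] (G : ZMod e → M) :
    ∑ k ∈ Finset.range e, G ((k : ℕ) : ZMod e) = ∑ k : ZMod e, G k := by
  refine Finset.sum_bij (fun k _ => ((k : ℕ) : ZMod e)) (fun _ _ => Finset.mem_univ _) ?_ ?_
    (fun _ _ => rfl)
  · intro a ha b hb h
    have := congrArg ZMod.val h
    rwa [ZMod.val_natCast_of_lt (Finset.mem_range.1 ha),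
      ZMod.val_natCast_of_lt (Finset.mem_range.1 hb)] at this
  · intro b _
    exact ⟨b.val, Finset.mem_range.2 (ZMod.val_lt b), ZMod.natCast_zmod_val b⟩

theorem xval_tau (e d : ℕ) [NeZero e] (m : ZMod e → ℕ)
    (hm : ∀ k, m (k + (d : ZMod e)) = m k) (xv : BIdx e m → ℂ) (k : ZMod e) :
    xval e m (xv ∘ tauB e d m hm) k = xval e m xv (k + d) := by
  funext i
  unfold xval
  simp only [hm k]
  split_ifs with h
  · rfl
  · rfl

/-- Transport along the shift for product-type functions. -/
theorem shift_prod (e d : ℕ) [NeZero e] (G H : ZMod e → ℂ) (h : ∀ k, G k = H (k + d)) :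
    ∏ k ∈ Finset.range e, G ((k : ℕ) : ZMod e) = ∏ k ∈ Finset.range e, H ((k : ℕ) : ZMod e) := by
  rw [prod_range_zmod, prod_range_zmod]
  exact Fintype.prod_equiv (Equiv.addRight (d : ZMod e)) _ _ h

theorem sAlpha_tau (e d : ℕ) [NeZero e] (m : ZMod e → ℕ)
    (hm : ∀ k, m (k + (d : ZMod e)) = m k) (xv : BIdx e m → ℂ) (γ : ZMod e → Multiset ℕ) :
    sAlphaSys e (mmX e m) (vvE e m (xv ∘ tauB e d m hm)) (liftE e γ) =
      sAlphaSys e (mmX e m) (vvE e m xv) (liftE e (theta e d γ)) := by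
  refine shift_prod e d
    (fun k => schurFin (m k) (γ k) (xval e m (xv ∘ tauB e d m hm) k))
    (fun k => schurFin (m k) (theta e d γ k) (xval e m xv k)) (fun k => ?_)
  simp only [xval_tau, theta, hm, add_sub_cancel_right]

theorem mAlpha_tau (e d : ℕ) [NeZero e] (m : ZMod e → ℕ)
    (hm : ∀ k, m (k + (d : ZMod e)) = m k) (xv : BIdx e m → ℂ) (γ : ZMod e → Multiset ℕ) :
    mAlphaSys e (mmX e m) (vvE e m (xv ∘ tauB e d m hm)) (liftE e γ) =
      mAlphaSys e (mmX e m) (vvE e m xv) (liftE e (theta e d γ)) := by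
  refine shift_prod e d
    (fun k => monoFin (m k) (γ k) (xval e m (xv ∘ tauB e d m hm) k))
    (fun k => monoFin (m k) (theta e d γ k) (xval e m xv k)) (fun k => ?_)
  simp only [xval_tau, theta, hm, add_sub_cancel_right]

/-- `q_{r,±}^{(k)}` with `k ∈ ZMod e`. -/
noncomputable def qZ (t : ℂ) (e : ℕ) [NeZero e] (m : ZMod e → ℕ) (v : ZMod e → ℕ → ℂ)
    (k k' : ZMod e) (r : ℕ) : ℂ :=
  if r = 0 then 1 else
    ∑ i ∈ Finset.range (m k),
      v k i ^ ((r : ℤ) + (m k : ℤ) - 1 - (m k' : ℤ)) *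
        (∏ jj ∈ Finset.range (m k'), (v k i - t * v k' jj)) /
        ∏ jj ∈ (Finset.range (m k)).erase i, (v k i - v k jj)

theorem qGen_eq (t : ℂ) (e : ℕ) [NeZero e] (m : ZMod e → ℕ) (xv : BIdx e m → ℂ) (sgn : Bool)
    (k r : ℕ) :
    qGenSys t e (mmX e m) (vvE e m xv) sgn k r =
      qZ t e m (xval e m xv) (k : ZMod e) ((k : ZMod e) + if sgn then 1 else -1) r := by
  have h1 : (((if sgn then (k + 1) % e else (k + e - 1) % e : ℕ)) : ZMod e) =
      (k : ZMod e) + if sgn then 1 else -1 := by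
    cases sgn
    · have : 1 ≤ k + e := by have := NeZero.pos e; omega
      simp [ZMod.natCast_mod, Nat.cast_sub this, sub_eq_add_neg]
    · simp [ZMod.natCast_mod]
  unfold qGenSys qZ
  simp only [mmX, vvE, h1]

theorem qAlpha_tau (e d : ℕ) [NeZero e] (m : ZMod e → ℕ)
    (hm : ∀ k, m (k + (d : ZMod e)) = m k) (t : ℂ) (sgn : Bool)
    (xv : BIdx e m → ℂ) (γ : ZMod e → Multiset ℕ) :
    qAlphaSys t e (mmX e m) (vvE e m (xv ∘ tauB e d m hm)) sgn (liftE e γ) =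
      qAlphaSys t e (mmX e m) (vvE e m xv) sgn (liftE e (theta e d γ)) := by
  unfold qAlphaSys
  simp only [qGen_eq]
  refine shift_prod e d
    (fun k => ((γ k).map fun r => qZ t e m (xval e m (xv ∘ tauB e d m hm)) k
      (k + if sgn then 1 else -1) r).prod)
    (fun k => ((theta e d γ k).map fun r => qZ t e m (xval e m xv) k
      (k + if sgn then 1 else -1) r).prod) (fun k => ?_)
  simp only [theta, add_sub_cancel_right, qZ, xval_tau]
  rw [add_right_comm k (d : ZMod e), hm, hm]

theorem iter_tau {e d : ℕ} [NeZero e] {m : ZMod e → ℕ}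
    (hm : ∀ k, m (k + (d : ZMod e)) = m k)
    (A : (BIdx e m → ℂ) → (ZMod e → Multiset ℕ) → ℂ)
    (hA : ∀ xv γ, A (xv ∘ tauB e d m hm) γ = A xv (theta e d γ)) (i : ℕ) :
    ∀ xv γ, A (xv ∘ (tauB e d m hm)^[i]) γ = A xv ((theta e d)^[i] γ) := by
  induction i with
  | zero => intro xv γ; rfl
  | succ i ih =>
    intro xv γ
    rw [Function.iterate_succ, ← Function.comp_assoc, hA, ih, Function.iterate_succ_apply]

theorem theta_iter (e d : ℕ) [NeZero e] (i : ℕ) :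
    ∀ γ : ZMod e → Multiset ℕ, (theta e d)^[i] γ = fun k => γ (k - ((i * d : ℕ) : ZMod e)) := by
  induction i with
  | zero => intro γ; simp
  | succ i ih =>
    intro γ
    rw [Function.iterate_succ_apply, ih]
    funext k
    simp only [theta]
    congr 1
    push_cast
    ring

theorem geom_root (ω : ℂ) (N : ℕ) (h : ω ^ N = 1) :
    ∑ b ∈ Finset.range N, ω ^ b = if ω = 1 then (N : ℂ) else 0 := by
  split_ifs with h1
  · simp [h1]
  · rw [geom_sum_eq h1, h]; simp

theorem sum_range_blocks (f : ℕ → ℂ) (c N : ℕ) :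
    ∑ i ∈ Finset.range (c * N), f i =
      ∑ b ∈ Finset.range N, ∑ a ∈ Finset.range c, f (c * b + a) := by
  induction N with
  | zero => simp
  | succ N ih => rw [Nat.mul_succ, Finset.sum_range_add, ih, Finset.sum_range_succ]

theorem orbit_sum {e p d : ℕ} [NeZero e] (q : ℕ) (hpd : p * d = e) {ζ : ℂ}
    (hζ : IsPrimitiveRoot ζ e) (α : ZMod e → Multiset ℕ)
    (F : (ZMod e → Multiset ℕ) → ℂ) :
    ∑ i ∈ Finset.range p, ζ ^ (q * i * d) * F ((theta e d)^[i] α) =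
      if p ∣ q * csize e d α then
        ((p / csize e d α : ℕ) : ℂ) *
          ∑ i ∈ Finset.range (csize e d α), ζ ^ (q * i * d) * F ((theta e d)^[i] α)
      else 0 := by
  have he : 0 < e := NeZero.pos e
  have hω : IsPrimitiveRoot (ζ ^ d) p := hζ.pow he (by rw [mul_comm]; exact hpd.symm)
  have hper : Function.IsPeriodicPt (theta e d) p α := by
    unfold Function.IsPeriodicPt Function.IsFixedPt
    rw [theta_iter, hpd]
    simp
  have hcp : csize e d α ∣ p := hper.minimalPeriod_dvd
  have hcper : (theta e d)^[csize e d α] α = α := Function.iterate_minimalPeriod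
  generalize csize e d α = c at *
  have hcm : ∀ b, (theta e d)^[c * b] α = α := by
    intro b
    rw [Function.iterate_mul]
    exact Function.iterate_fixed hcper b
  obtain ⟨N, rfl⟩ := hcp
  have hc : 0 < c := by
    rcases Nat.eq_zero_or_pos c with h | h
    · subst h; simp at hpd; omega
    · exact h
  rw [Nat.mul_div_cancel_left _ hc, sum_range_blocks]
  have hterm : ∀ b a, ζ ^ (q * (c * b + a) * d) * F ((theta e d)^[c * b + a] α) =
      ((ζ ^ d) ^ (q * c)) ^ b * (ζ ^ (q * a * d) * F ((theta e d)^[a] α)) := by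
    intro b a
    rw [add_comm (c * b) a, Function.iterate_add_apply, hcm, ← pow_mul, ← pow_mul,
      ← mul_assoc, ← pow_add]
    congr 2
    ring
  simp only [hterm]
  simp only [← Finset.mul_sum]
  rw [← Finset.sum_mul, geom_root]
  · simp only [hω.pow_eq_one_iff_dvd]
    split_ifs <;> simp
  · rw [← pow_mul, mul_assoc, mul_comm q, pow_mul, hω.pow_eq_one, one_pow]

theorem pow_val_add {e : ℕ} [NeZero e] {u : ℂ} (hu : u ^ e = 1) (k : ZMod e) (d : ℕ) :
    u ^ (k + (d : ZMod e)).val = u ^ k.val * u ^ d := by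
  rw [← pow_add]
  have h : (k + (d : ZMod e)).val = (k.val + d) % e := by
    rw [ZMod.val_add, ZMod.val_natCast, Nat.add_mod_mod]
  rw [h]
  exact (pow_eq_pow_mod _ hu).symm

theorem pGen_tau {e d : ℕ} [NeZero e] {ζ : ℂ} (hζ : ζ ^ e = 1) (m : ZMod e → ℕ)
    (hm : ∀ k, m (k + (d : ZMod e)) = m k) (xv : BIdx e m → ℂ) (i r : ℕ) (hr : 0 < r) :
    pGenSys ζ e (mmX e m) (vvE e m (xv ∘ tauB e d m hm)) i r * ζ ^ (i * d) =
      pGenSys ζ e (mmX e m) (vvE e m xv) i r := by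
  have key : ∀ yv : BIdx e m → ℂ, pGenSys ζ e (mmX e m) (vvE e m yv) i r =
      ∑ k : ZMod e, (ζ ^ i) ^ k.val * ∑ s ∈ Finset.range (m k), xval e m yv k s ^ r := by
    intro yv
    rw [← sum_range_zmod]
    unfold pGenSys
    rw [if_neg hr.ne']
    refine Finset.sum_congr rfl (fun k hk => ?_)
    rw [ZMod.val_natCast_of_lt (Finset.mem_range.1 hk), pow_mul]
    rfl
  rw [key, key, Finset.sum_mul]
  have hu : (ζ ^ i) ^ e = 1 := by rw [← pow_mul, mul_comm, pow_mul, hζ, one_pow]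
  refine Fintype.sum_equiv (Equiv.addRight (d : ZMod e)) _ _ (fun k => ?_)
  simp only [Equiv.coe_addRight]
  rw [pow_val_add hu, hm, xval_tau, ← pow_mul ζ i d]
  ring

theorem multiset_prod_scale (M : Multiset ℕ) (f g : ℕ → ℂ) (w : ℂ)
    (h : ∀ r ∈ M, f r * w = g r) : (M.map f).prod * w ^ M.card = (M.map g).prod := by
  induction M using Multiset.induction_on with
  | empty => simp
  | cons a M ih =>
    have h1 := ih (fun r hr => h r (Multiset.mem_cons_of_mem hr))
    have h2 := h a (Multiset.mem_cons_self a M)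
    rw [Multiset.map_cons, Multiset.map_cons, Multiset.prod_cons, Multiset.prod_cons,
      Multiset.card_cons, ← h1, ← h2]
    ring

theorem Delta_eq (e : ℕ) [NeZero e] (β : ZMod e → Multiset ℕ) :
    Delta e β = ∑ k ∈ Finset.range e, k * (liftE e β k).card := by
  unfold Delta
  rw [← sum_range_zmod e (fun k => k.val * (β k).card)]
  refine Finset.sum_congr rfl (fun k hk => ?_)
  rw [ZMod.val_natCast_of_lt (Finset.mem_range.1 hk)]
  rfl

theorem pAlpha_tau {e d : ℕ} [NeZero e] {ζ : ℂ} (hζ : ζ ^ e = 1) (m : ZMod e → ℕ)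
    (hm : ∀ k, m (k + (d : ZMod e)) = m k) (β : ZMod e → Multiset ℕ)
    (hβ : ∀ k, ∀ x ∈ β k, 0 < x) (xv : BIdx e m → ℂ) :
    pAlphaSys ζ e (mmX e m) (vvE e m (xv ∘ tauB e d m hm)) (liftE e β) * (ζ ^ d) ^ Delta e β =
      pAlphaSys ζ e (mmX e m) (vvE e m xv) (liftE e β) := by
  unfold pAlphaSys
  rw [Delta_eq, ← Finset.prod_pow_eq_pow_sum, ← Finset.prod_mul_distrib]
  refine Finset.prod_congr rfl (fun k _ => ?_)
  rw [pow_mul, ← pow_mul ζ d k, mul_comm d k]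
  exact multiset_prod_scale _ _ _ _ (fun r hr => pGen_tau hζ m hm xv k r (hβ _ r hr))

theorem pAlpha_tau_iter {e d : ℕ} [NeZero e] {ζ : ℂ} (hζ : ζ ^ e = 1) (m : ZMod e → ℕ)
    (hm : ∀ k, m (k + (d : ZMod e)) = m k) (β : ZMod e → Multiset ℕ)
    (hβ : ∀ k, ∀ x ∈ β k, 0 < x) (i : ℕ) : ∀ xv : BIdx e m → ℂ,
    pAlphaSys ζ e (mmX e m) (vvE e m (xv ∘ (tauB e d m hm)^[i])) (liftE e β) *
        ((ζ ^ d) ^ Delta e β) ^ i =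
      pAlphaSys ζ e (mmX e m) (vvE e m xv) (liftE e β) := by
  induction i with
  | zero => intro xv; simp
  | succ i ih =>
    intro xv
    rw [Function.iterate_succ, ← Function.comp_assoc, pow_succ', ← mul_assoc,
      pAlpha_tau hζ m hm β hβ, ih]

theorem p_sum {e p d : ℕ} [NeZero e] (q : ℕ) (hpd : p * d = e) {ζ : ℂ}
    (hζ : IsPrimitiveRoot ζ e) (m : ZMod e → ℕ)
    (hm : ∀ k, m (k + (d : ZMod e)) = m k) (β : ZMod e → Multiset ℕ)
    (hβ : ∀ k, ∀ x ∈ β k, 0 < x) (xv : BIdx e m → ℂ) :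
    (∑ i ∈ Finset.range p, ζ ^ (q * i * d) *
        pAlphaSys ζ e (mmX e m) (vvE e m (xv ∘ (tauB e d m hm)^[i])) (liftE e β)) =
      if (Delta e β : ZMod p) = (q : ZMod p) then
        (p : ℂ) * pAlphaSys ζ e (mmX e m) (vvE e m xv) (liftE e β)
      else 0 := by
  have he : 0 < e := NeZero.pos e
  have hω : IsPrimitiveRoot (ζ ^ d) p := hζ.pow he (by rw [mul_comm]; exact hpd.symm)
  have hp0 : p ≠ 0 := by rintro rfl; simp at hpd; omega
  have hne : ζ ^ d ≠ 0 := hω.ne_zero hp0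
  have hterm : ∀ i, ζ ^ (q * i * d) *
        pAlphaSys ζ e (mmX e m) (vvE e m (xv ∘ (tauB e d m hm)^[i])) (liftE e β) =
      ((ζ ^ d) ^ q / (ζ ^ d) ^ Delta e β) ^ i *
        pAlphaSys ζ e (mmX e m) (vvE e m xv) (liftE e β) := by
    intro i
    rw [← pAlpha_tau_iter hζ.pow_eq_one m hm β hβ i xv, div_pow]
    have h0 : ((ζ ^ d) ^ Delta e β) ^ i ≠ 0 := pow_ne_zero _ (pow_ne_zero _ hne)
    have h1 : ζ ^ (q * i * d) = ((ζ ^ d) ^ q) ^ i := by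
      rw [← pow_mul, ← pow_mul]; congr 1; ring
    rw [h1]
    field_simp
  simp only [hterm]
  rw [← Finset.sum_mul, geom_root]
  · have hiff : ((ζ ^ d) ^ q / (ζ ^ d) ^ Delta e β = 1) ↔
        (Delta e β : ZMod p) = (q : ZMod p) := by
      rw [ZMod.natCast_eq_natCast_iff, Nat.modEq_iff_dvd, ← hω.zpow_eq_one_iff_dvd,
        zpow_sub₀ hne, zpow_natCast, zpow_natCast]
    simp only [hiff]
    split_ifs <;> simp
  · rw [div_pow, pow_right_comm _ q, pow_right_comm _ (Delta e β),
      hω.pow_eq_one, one_pow, one_pow, div_one]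

/-- (3.3.4), (3.3.5).  Let `Θ_q = ∑_{i=0}^{p-1} ζ^{qid} θ^i`
act on polynomials in the `x_i^{(k)}` via `θ(x_j^{(k)}) = x_j^{(k+d)}` (in
evaluated form, `(θF)(xv) = F(xv ∘ τ_V)`).  Then:
(a) `Θ_q(p_β) = p·p_β` if `Δ(β) ≡ q (mod p)`, and `= 0` otherwise;
(b) `Θ_q(s_α) = (p/c) ∑_{i<c} ζ^{qid} s_{θ^i(α)}` if `qc ≡ 0 (mod p)`
(`c = c_{α,p}`), and `= 0` otherwise; and the same formula holds with `s`
replaced by the monomial functions `m` and by the functions `q_{·,±}`. -/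
theorem statement8 (e p d n q : ℕ) [NeZero e] [NeZero n] (hp : p ∣ e) (hd : d = e / p)
    (hq : q ∣ e)
    (ζ : ℂ) (hζ : IsPrimitiveRoot ζ e)
    (m : ZMod e → ℕ) (hmn : ∀ k, n ≤ m k) (hm : ∀ k, m (k + (d : ZMod e)) = m k)
    (β α : ZMod e → Multiset ℕ)
    (hβ : IsEPartition e n β) (hα : IsEPartition e n α) (t : ℂ) :
    (∀ xv : BIdx e m → ℂ,
      (∑ i ∈ Finset.range p, ζ ^ (q * i * d) *
          pAlphaSys ζ e (mmX e m) (vvE e m (xv ∘ (tauB e d m hm)^[i])) (liftE e β)) =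
        if (Delta e β : ZMod p) = (q : ZMod p) then
          (p : ℂ) * pAlphaSys ζ e (mmX e m) (vvE e m xv) (liftE e β)
        else 0)
    ∧
    (∀ xv : BIdx e m → ℂ,
      (∑ i ∈ Finset.range p, ζ ^ (q * i * d) *
          sAlphaSys e (mmX e m) (vvE e m (xv ∘ (tauB e d m hm)^[i])) (liftE e α)) =
        if p ∣ q * csize e d α then
          ((p / csize e d α : ℕ) : ℂ) *
            ∑ i ∈ Finset.range (csize e d α), ζ ^ (q * i * d) *
              sAlphaSys e (mmX e m) (vvE e m xv) (liftE e ((theta e d)^[i] α))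
        else 0)
    ∧
    (∀ xv : BIdx e m → ℂ,
      (∑ i ∈ Finset.range p, ζ ^ (q * i * d) *
          mAlphaSys e (mmX e m) (vvE e m (xv ∘ (tauB e d m hm)^[i])) (liftE e α)) =
        if p ∣ q * csize e d α then
          ((p / csize e d α : ℕ) : ℂ) *
            ∑ i ∈ Finset.range (csize e d α), ζ ^ (q * i * d) *
              mAlphaSys e (mmX e m) (vvE e m xv) (liftE e ((theta e d)^[i] α))
        else 0)
    ∧
    (∀ sgn : Bool, ∀ xv : BIdx e m → ℂ,
      (∀ k : ZMod e, ∀ i j : ℕ, i < m k → j < m k → i ≠ j →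
          xval e m xv k i ≠ xval e m xv k j) →
      (∀ k : ZMod e, ∀ i : ℕ, i < m k → xval e m xv k i ≠ 0) →
      (∑ i ∈ Finset.range p, ζ ^ (q * i * d) *
          qAlphaSys t e (mmX e m) (vvE e m (xv ∘ (tauB e d m hm)^[i])) sgn (liftE e α)) =
        if p ∣ q * csize e d α then
          ((p / csize e d α : ℕ) : ℂ) *
            ∑ i ∈ Finset.range (csize e d α), ζ ^ (q * i * d) *
              qAlphaSys t e (mmX e m) (vvE e m xv) sgn (liftE e ((theta e d)^[i] α))
        else 0) := by
  have hpd : p * d = e := by rw [hd]; exact Nat.mul_div_cancel' hp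
  refine ⟨fun xv => p_sum q hpd hζ m hm β hβ.1 xv, fun xv => ?_, fun xv => ?_,
    fun sgn xv _ _ => ?_⟩
  · have h := fun i => iter_tau hm
      (fun xv γ => sAlphaSys e (mmX e m) (vvE e m xv) (liftE e γ))
      (sAlpha_tau e d m hm) i xv α
    simp only [h]
    exact orbit_sum q hpd hζ α (fun γ => sAlphaSys e (mmX e m) (vvE e m xv) (liftE e γ))
  · have h := fun i => iter_tau hm
      (fun xv γ => mAlphaSys e (mmX e m) (vvE e m xv) (liftE e γ))
      (mAlpha_tau e d m hm) i xv α
    simp only [h]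
    exact orbit_sum q hpd hζ α (fun γ => mAlphaSys e (mmX e m) (vvE e m xv) (liftE e γ))
  · have h := fun i => iter_tau hm
      (fun xv γ => qAlphaSys t e (mmX e m) (vvE e m xv) sgn (liftE e γ))
      (qAlpha_tau e d m hm t sgn) i xv α
    simp only [h]
    exact orbit_sum q hpd hζ α (fun γ => qAlphaSys t e (mmX e m) (vvE e m xv) sgn (liftE e γ))

end GreenII
end

section
/- Let α ∈ 𝒫_{n,e} satisfy condition (2.6.1) for j, let h = h_j, and let β = α[j] be the associated j₁d-partition of n/h. Then z_β(t^h) = h^{−2l(β)}·z_α(t), where z_α(t) = z_α·Π_{k=0}^{e−1}Π_i(1 − ζ^k t^{α_i^{(k)}})^{−1} with z_α = |Z_{W̃}(w_α)| = e^{l(α)}Π_k z_{α^{(k)}}, and z_β(t^h) is defined analogously for the j₁d-partition β with ζ replaced by ζ^h and t by t^h. -/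
/-!
Common framework for formalizing T. Shoji, "Green functions associated to
complex reflection groups, II" (arXiv:math/0105053).

We model:
* `e`-partitions of `n` as functions `ZMod e → Multiset ℕ`;
* the complex reflection group `W̃ = G(e,1,n)` as the semidirect product
  `(Fin n → Multiplicative (ZMod e)) ⋊ Equiv.Perm (Fin n)`, and
  `W = G(e,p,n)` as the kernel of the mod-`p` sum character;
* the tensor space `V^{⊗n}` concretely via matrices indexed by
  `Fin n → (Σ k : ZMod e, Fin (m k))`;
* symmetric functions in the (finitely many, `m k ≥ n`) variables
  `x_i^{(k)}` in evaluated form, i.e. as functions of an assignment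
  `xv : (Σ k : ZMod e, Fin (m k)) → ℂ`.
-/

open scoped BigOperators

attribute [local instance] Classical.propDecidable

namespace GreenII

lemma prod_range_mul_of_dvd {M : Type*} [CommMonoid M] (h E : ℕ) (hh : 0 < h) (f : ℕ → M)
    (hf : ∀ k, k < h * E → ¬ h ∣ k → f k = 1) :
    ∏ k ∈ Finset.range (h * E), f k = ∏ k ∈ Finset.range E, f (h * k) := by
  symm
  apply Finset.prod_of_injOn (fun k => h * k)
  · intro a _ b _ hab
    exact Nat.eq_of_mul_eq_mul_left hh hab
  · intro a ha
    simp only [Finset.coe_range, Set.mem_Iio] at ha ⊢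
    exact Nat.mul_lt_mul_of_pos_left ha hh
  · intro k hk hk'
    apply hf k (Finset.mem_range.mp hk)
    rintro ⟨c, rfl⟩
    apply hk'
    refine ⟨c, ?_, rfl⟩
    simp only [Finset.coe_range, Set.mem_Iio]
    exact Nat.lt_of_mul_lt_mul_left (Finset.mem_range.mp hk)
  · intro _ _
    rfl

lemma zPart_map_mul (h : ℕ) (hh : 0 < h) (μ : Multiset ℕ) :
    zPart (μ.map (fun r => h * r)) = (h : ℂ) ^ μ.card * zPart μ := by
  have hinj : Function.Injective (fun r : ℕ => h * r) :=
    fun a b hab => Nat.eq_of_mul_eq_mul_left hh hab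
  unfold zPart
  have h1 : (μ.map (fun r => h * r)).toFinset = μ.toFinset.image (fun r => h * r) := by
    ext x; simp
  rw [h1, Finset.prod_image (fun a _ b _ hab => hinj hab)]
  have h2 : (h : ℂ) ^ μ.card = ∏ i ∈ μ.toFinset, (h : ℂ) ^ μ.count i := by
    rw [Finset.prod_pow_eq_pow_sum, Multiset.toFinset_sum_count_eq]
  rw [h2, ← Finset.prod_mul_distrib]
  apply Finset.prod_congr rfl
  intro i _
  have h3 : Multiset.count (h * i) (μ.map (fun r => h * r)) = μ.count i :=
    Multiset.count_map_eq_count' (fun r : ℕ => h * r) μ hinj i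
  rw [h3]
  push_cast
  ring

/-- formula (3.4.7).  Let `α ∈ 𝒫_{n,e}` satisfy (2.6.1)
for `j`, `h = h_j`, and `β = α[j]` the associated `j₁d`-partition of `n/h`.
Then `z_β(t^h) = h^{-2 l(β)} z_α(t)`. -/
theorem statement12 (e p d n : ℕ) [NeZero e] [NeZero n] (hp : p ∣ e) (hd : d = e / p)
    (ζ : ℂ) (hζ : IsPrimitiveRoot ζ e)
    (α : ZMod e → Multiset ℕ) (hα : IsEPartition e n α)
    (j : ℕ) (hj : j < p) (hcond : Cond261 e p j α)
    (t : ℂ) :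
    zClassSys (ζ ^ hOrd p j) (t ^ hOrd p j) (Esys p d j) (bracketF e p d j α) =
      ((hOrd p j : ℂ) ^ (2 * lenBracket e p d j α))⁻¹ * zClassSys ζ t e (liftE e α) := by
  have hppos : 0 < p := by omega
  haveI : NeZero p := ⟨hppos.ne'⟩
  have hpos : 0 < hOrd p j := addOrderOf_pos _
  have hdvd : hOrd p j ∣ p := by
    have := addOrderOf_dvd_card (x := (j : ZMod p))
    rwa [ZMod.card] at this
  have he : hOrd p j * Esys p d j = e := by
    unfold Esys
    rw [← mul_assoc, Nat.mul_div_cancel' hdvd, hd, Nat.mul_div_cancel' hp]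
  have hdiv := hcond.1
  have hcomp := hcond.2
  unfold lenBracket
  generalize hE : Esys p d j = E at *
  have hβ : ∀ k < E, liftE e α (hOrd p j * k) =
      (bracketF e p d j α k).map (fun r => hOrd p j * r) := by
    intro k hk
    unfold bracketF liftE
    rw [hE, if_pos hk, Multiset.map_map]
    conv_lhs => rw [← Multiset.map_id (α _)]
    apply Multiset.map_congr rfl
    intro r hr
    exact (Nat.mul_div_cancel' (hdiv _ r hr)).symm
  have hzero : ∀ k, k < hOrd p j * E → ¬ hOrd p j ∣ k → liftE e α k = 0 := by
    intro k hk hnd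
    by_contra hne
    apply hnd
    have := hcomp _ hne
    rwa [ZMod.val_cast_of_lt (he ▸ hk)] at this
  generalize bracketF e p d j α = β at *
  generalize liftE e α = γ at *
  generalize hOrd p j = h at *
  have hh0 : (h : ℂ) ≠ 0 := by exact_mod_cast hpos.ne'
  unfold zClassSys
  have hlen : ∑ k ∈ Finset.range e, (γ k).card = ∑ k ∈ Finset.range E, (β k).card := by
    rw [← he]
    have := prod_range_mul_of_dvd (M := Multiplicative ℕ) h E hpos
      (fun k => Multiplicative.ofAdd (γ k).card)
      (fun k hk hnd => by simp [hzero k hk hnd])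
    have h2 : ∑ k ∈ Finset.range (h * E), (γ k).card
        = ∑ k ∈ Finset.range E, (γ (h * k)).card := this
    rw [h2]
    apply Finset.sum_congr rfl
    intro k hk
    rw [hβ k (Finset.mem_range.mp hk), Multiset.card_map]
  have hz : ∏ k ∈ Finset.range e, zPart (γ k)
      = (h : ℂ) ^ (∑ k ∈ Finset.range E, (β k).card) * ∏ k ∈ Finset.range E, zPart (β k) := by
    rw [← he, prod_range_mul_of_dvd h E hpos _
      (fun k hk hnd => by simp [hzero k hk hnd, zPart]),
      ← Finset.prod_pow_eq_pow_sum, ← Finset.prod_mul_distrib]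
    apply Finset.prod_congr rfl
    intro k hk
    rw [hβ k (Finset.mem_range.mp hk), zPart_map_mul h hpos]
  have hq : ∏ k ∈ Finset.range e, ((γ k).map fun r => (1 - ζ ^ k * t ^ r)).prod
      = ∏ k ∈ Finset.range E, ((β k).map fun r => (1 - (ζ ^ h) ^ k * (t ^ h) ^ r)).prod := by
    conv_lhs => rw [← he]
    rw [prod_range_mul_of_dvd h E hpos _
      (fun k hk hnd => by simp [hzero k hk hnd])]
    apply Finset.prod_congr rfl
    intro k hk
    rw [hβ k (Finset.mem_range.mp hk), Multiset.map_map]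
    simp only [Function.comp_def, pow_mul]
  have hec : (e : ℂ) = h * E := by rw [← he]; push_cast; rfl
  rw [hlen, hz, hq, hec, mul_pow, two_mul, pow_add]
  have hL : (h : ℂ) ^ (∑ k ∈ Finset.range E, (β k).card) ≠ 0 := pow_ne_zero _ hh0
  generalize (h : ℂ) ^ (∑ k ∈ Finset.range E, (β k).card) = L at *
  generalize (∏ k ∈ Finset.range E,
    ((β k).map fun r => (1 - (ζ ^ h) ^ k * (t ^ h) ^ r)).prod)⁻¹ = Q
  field_simp

end GreenII
end
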